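/- There exists a maximally-parallel Fréchet matching between R and B: a matching (f, g) with cost equal to d_F(R, B), together with a nonzero vector u ∈ ℝ² and parameters 0 ≤ t₀ ≤ t₁ ≤ 1, such that (i) on [0, t₀] either f is identically 0 or g is identically 0 (the first fan keeps one curve at the common start point), (ii) on [t₁, 1] either f is identically 1 or g is identically 1 (the last fan keeps one curve at the common end point), and (iii) for every t ∈ [t₀, t₁] the vector R(f(t)) − B(g(t)) is a scalar multiple of u (in the parallel part, every matched pair of points lies on a line parallel to u). -/

import Mathlib

open Set

noncomputable section

abbrev E2 := EuclideanSpace ℝ (Fin 2)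

/-- `R` is piecewise affine on `[0,1]` with finitely many breakpoints. -/
def IsPiecewiseAffine (R : ℝ → E2) : Prop :=
  ∃ (k : ℕ) (t : ℕ → ℝ), 0 < k ∧ t 0 = 0 ∧ t k = 1 ∧
    (∀ i < k, t i < t (i + 1)) ∧
    ∀ i < k, ∀ x ∈ Icc (t i) (t (i + 1)),
      R x = R (t i) + ((x - t i) / (t (i + 1) - t i)) • (R (t (i + 1)) - R (t i))

/-- A reparameterization: a nondecreasing surjection of `[0,1]` onto `[0,1]`. -/
def IsRepar (f : ℝ → ℝ) : Prop :=
  MonotoneOn f (Icc 0 1) ∧ MapsTo f (Icc 0 1) (Icc 0 1) ∧ SurjOn f (Icc 0 1) (Icc 0 1)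

/-- The (Euclidean) cost of a matching `(f, g)` between `R` and `B`. -/
def eCost (R B : ℝ → E2) (f g : ℝ → ℝ) : ℝ :=
  sSup {c : ℝ | ∃ t ∈ Icc (0:ℝ) 1, c = ‖R (f t) - B (g t)‖}

/-- The (Euclidean) Fréchet distance between `R` and `B`. -/
def eFrechet (R B : ℝ → E2) : ℝ :=
  sInf {c : ℝ | ∃ f g : ℝ → ℝ, IsRepar f ∧ IsRepar g ∧ c = eCost R B f g}

/-! Along any matching `(f, g)` the chord direction turns continuously, and in a strictly convex
body an intermediate value argument finds a matched pair of antipodal points: the body lies in a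
strip whose two boundary lines support it at these points. Let `u` be the chord between them. No
chord parallel to `u` is longer than `u`, and the points of the two arcs outside the strip between
the `u`-lines through the common endpoints are no farther from the nearest endpoint than the cost
of `(f, g)`. Both conditions are closed, so they pass to the limit when `P` is approximated by
strictly convex bodies, and compactness supplies a direction `u` whose bound is the Fréchet
distance itself. Given such a `u`, points are matched along the `u`-lines inside the strip, which
is monotone by convexity, and the parts outside it form the two fans. -/

section ConvexBody

variable {E : Type*} [NormedAddCommGroup E] [NormedSpace ℝ E] {P : Set E} {φ : E →L[ℝ] ℝ}
  {x y z i D : E} {k d : ℝ}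

theorem exists_mem_apply_lt_of_isOpen {U : Set E} (hU : IsOpen U) (hφ : φ ≠ 0) (hx : x ∈ U) :
    ∃ y ∈ U, φ y < φ x := by
  have hmem : φ '' U ∈ nhds (φ x) :=
    (φ.isOpenMap_of_ne_zero hφ U hU).mem_nhds (mem_image_of_mem φ hx)
  obtain ⟨_, hlt, y, hy, rfl⟩ := Filter.Eventually.exists_lt hmem
  exact ⟨y, hy, hlt⟩

theorem exists_mem_frontier_apply_lt (hP : IsCompact P) (hi : i ∈ interior P) (hφ : φ ≠ 0) :
    ∃ z ∈ frontier P, φ z < φ i := by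
  obtain ⟨z, hz, hmin⟩ :=
    hP.exists_isMinOn ⟨i, interior_subset hi⟩ φ.continuous.continuousOn
  have hbelow : ∀ x ∈ interior P, φ z < φ x := fun x hx => by
    obtain ⟨y, hy, hlt⟩ := exists_mem_apply_lt_of_isOpen isOpen_interior hφ hx
    exact (hmin (interior_subset hy)).trans_lt hlt
  exact ⟨z, ⟨subset_closure hz, fun hzi => (hbelow z hzi).false⟩, hbelow i hi⟩

theorem exists_pos_add_smul_mem_frontier (hP : Bornology.IsBounded P) (hi : i ∈ interior P)
    (hD : D ≠ 0) : ∃ k : ℝ, 0 < k ∧ i + k • D ∈ frontier P := by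
  obtain ⟨M, hM⟩ := hP.closure.subset_closedBall i
  have hleaves : i + ((|M| + 1) / ‖D‖) • D ∉ closure P := fun hmem => by
    have hle := hM hmem
    rw [mem_closedBall_iff_norm, add_sub_cancel_left, norm_smul,
      Real.norm_of_nonneg (by positivity), div_mul_cancel₀ _ (norm_ne_zero_iff.mpr hD)] at hle
    linarith [le_abs_self M]
  have hstart : i + (0 : ℝ) • D ∈ interior P := by simpa using hi
  by_contra! hmiss
  have hcont : Continuous fun k : ℝ => i + k • D := by fun_prop
  obtain ⟨k, -, hint, hcl⟩ := isPreconnected_Ici (a := (0 : ℝ))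
    ((fun k : ℝ => i + k • D) ⁻¹' interior P) ((fun k : ℝ => i + k • D) ⁻¹' (closure P)ᶜ)
    (isOpen_interior.preimage hcont) (isClosed_closure.isOpen_compl.preimage hcont)
    (fun k hk => by
      rcases (mem_Ici.mp hk).eq_or_lt with rfl | hpos
      · exact Or.inl hstart
      · by_cases hk : i + k • D ∈ interior P
        exacts [Or.inl hk, Or.inr fun hcl => hmiss k hpos ⟨hcl, hk⟩])
    ⟨0, self_mem_Ici, hstart⟩ ⟨_, by simp only [mem_Ici]; positivity, hleaves⟩
  exact hcl (subset_closure (interior_subset hint))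

theorem lineMap_mem_interior (hP : Convex ℝ P) (hi : i ∈ interior P) (hx : x ∈ closure P)
    (hk : 0 ≤ k) (hk1 : k < 1) : AffineMap.lineMap i x k ∈ interior P := by
  rcases hk.eq_or_lt with rfl | hk
  · simpa using hi
  · exact hP.openSegment_interior_closure_subset_interior hi hx
      (lineMap_mem_openSegment ℝ i x ⟨hk, hk1⟩)

theorem eq_one_of_lineMap_mem_frontier (hP : Convex ℝ P) (hi : i ∈ interior P)
    (hx : x ∈ frontier P) (hk : 0 < k) (hkx : AffineMap.lineMap i x k ∈ frontier P) : k = 1 := by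
  rcases lt_trichotomy k 1 with hlt | rfl | hgt
  · exact absurd (lineMap_mem_interior hP hi hx.1 hk.le hlt) hkx.2
  · rfl
  · refine absurd ?_ hx.2
    convert lineMap_mem_interior hP hi hkx.1 (inv_nonneg.mpr hk.le) (inv_lt_one_of_one_lt₀ hgt)
    simp [AffineMap.lineMap_apply, smul_smul, inv_mul_cancel₀ hk.ne']

theorem exists_mem_interior_apply_eq (hP : Convex ℝ P) (hint : (interior P).Nonempty)
    (hx : x ∈ P) (hy : y ∈ P) (hxd : φ x < d) (hdy : d < φ y) : ∃ i ∈ interior P, φ i = d := by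
  have hcl : closure (interior P) = closure P :=
    hP.closure_interior_eq_closure_of_nonempty_interior hint
  have happrox : ∀ z ∈ P, ∀ U : Set ℝ, IsOpen U → φ z ∈ U → ∃ i ∈ interior P, φ i ∈ U :=
    fun z hz U hU hzU => by
      have hz' : z ∈ closure (interior P) := hcl ▸ subset_closure hz
      obtain ⟨i, hiU, hi⟩ := mem_closure_iff.mp hz' _ (hU.preimage φ.continuous) hzU
      exact ⟨i, hi, hiU⟩
  obtain ⟨i, hi, hid⟩ := happrox x hx _ isOpen_Iio hxd
  obtain ⟨j, hj, hdj⟩ := happrox y hy _ isOpen_Ioi hdy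
  exact hP.interior.isPreconnected.intermediate_value hi hj φ.continuous.continuousOn
    ⟨hid.le, hdj.le⟩

theorem exists_mem_Icc_apply_eq {γ : ℝ → E} {a b : ℝ} (hγ : ContinuousOn γ (Icc 0 1))
    (ha : a ∈ Icc (0 : ℝ) 1) (hb : b ∈ Icc (0 : ℝ) 1) (hab : a ≤ b)
    (hd : d ∈ uIcc (φ (γ a)) (φ (γ b))) : ∃ s ∈ Icc a b, φ (γ s) = d := by
  have hsub : uIcc a b ⊆ Icc 0 1 := uIcc_subset_Icc ha hb
  obtain ⟨s, hs, rfl⟩ :=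
    intermediate_value_uIcc (φ.continuous.comp_continuousOn (hγ.mono hsub)) hd
  exact ⟨s, uIcc_of_le hab ▸ hs, rfl⟩

theorem exists_mem_segment_apply_eq (hx : φ x ≤ d) (hy : d ≤ φ y) :
    ∃ z ∈ segment ℝ x y, φ z = d := by
  have hc : d ∈ φ '' segment ℝ x y :=
    (image_segment ℝ (φ : E →ₗ[ℝ] ℝ).toAffineMap x y).symm ▸
      (segment_eq_Icc (hx.trans hy)).symm ▸ ⟨hx, hy⟩
  exact hc

theorem apply_eq_of_mem_segment (hz : z ∈ segment ℝ x y) (hxy : φ x = φ y) : φ z = φ x := by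
  obtain ⟨a, b, -, -, hab, rfl⟩ := hz
  rw [map_add, map_smul, map_smul, ← hxy, ← add_smul, hab, one_smul]

theorem eq_or_eq_of_mem_segment_of_mem_frontier (hP : StrictConvex ℝ P) (hx : x ∈ P) (hy : y ∈ P)
    (hz : z ∈ segment ℝ x y) (hzP : z ∈ frontier P) : z = x ∨ z = y := by
  rcases eq_or_ne x y with rfl | hxy
  · exact .inl (by simpa using hz)
  by_contra! hne
  exact hzP.2 (hP.openSegment_subset hx hy hxy
    (mem_openSegment_of_ne_left_right hne.1.symm hne.2.symm hz))

end ConvexBody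

section Plane

variable {E : Type*} [NormedAddCommGroup E] [InnerProductSpace ℝ E]
  [Fact (Module.finrank ℝ E = 2)] {P : Set E} {φ : E →L[ℝ] ℝ} {u x y z i : E}

theorem exists_eq_smul_of_apply_eq_zero (hφ : φ ≠ 0) (hu : u ≠ 0) (hφu : φ u = 0) (hφx : φ x = 0) :
    ∃ c : ℝ, x = c • u := by
  have : FiniteDimensional ℝ E := .of_fact_finrank_eq_two
  have hker := Module.Dual.finrank_ker_add_one_of_ne_zero (f := (φ : Module.Dual ℝ E))
    (by exact_mod_cast hφ)
  rw [Fact.out (p := Module.finrank ℝ E = 2)] at hker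
  obtain ⟨c, hc⟩ := exists_smul_eq_of_finrank_eq_one (Nat.succ_injective hker)
    (x := ⟨u, hφu⟩) (by simpa [Subtype.ext_iff] using hu) ⟨x, hφx⟩
  exact ⟨c, (congrArg Subtype.val hc).symm⟩

theorem eq_or_eq_of_mem_frontier_of_apply_eq (hP : Convex ℝ P) (hφ : φ ≠ 0)
    (hi : i ∈ interior P) (hx : x ∈ frontier P) (hy : y ∈ frontier P) (hz : z ∈ frontier P)
    (hφx : φ x = φ i) (hφy : φ y = φ i) (hφz : φ z = φ i) (hxy : x ≠ y) : z = x ∨ z = y := by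
  have hne : ∀ v ∈ frontier P, v - i ≠ 0 := fun v hv h => hv.2 (sub_eq_zero.mp h ▸ hi)
  have hparam : ∀ v ∈ frontier P, φ v = φ i → ∃ k : ℝ, k ≠ 0 ∧ v - i = k • (x - i) := by
    intro v hv hvi
    obtain ⟨k, hk⟩ := exists_eq_smul_of_apply_eq_zero hφ (hne x hx)
      (by rw [map_sub, hφx, sub_self]) (x := v - i) (by rw [map_sub, hvi, sub_self])
    exact ⟨k, fun h => hne v hv (by rw [hk, h, zero_smul]), hk⟩
  have hsame : ∀ v ∈ frontier P, ∀ w ∈ frontier P, ∀ k : ℝ, 0 < k → w - i = k • (v - i) →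
      w = v := by
    intro v hv w hw k hk hkw
    have hw' : AffineMap.lineMap i v k = w := by simp [AffineMap.lineMap_apply, ← hkw]
    rw [← hw', eq_one_of_lineMap_mem_frontier hP hi hv hk (hw' ▸ hw), AffineMap.lineMap_apply_one]
  obtain ⟨k, hk0, hk⟩ := hparam y hy hφy
  obtain ⟨l, hl0, hl⟩ := hparam z hz hφz
  have hkneg : k < 0 :=
    lt_of_le_of_ne (not_lt.mp fun hpos => hxy (hsame x hx y hy k hpos hk).symm) hk0
  rcases hl0.lt_or_gt with hlneg | hlpos
  · refine Or.inr (hsame y hy z hz (l / k) (div_pos_of_neg_of_neg hlneg hkneg) ?_)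
    rw [hk, hl, smul_smul, div_mul_cancel₀ _ hk0]
  · exact Or.inl (hsame x hx z hz l hlpos hl)

theorem mem_segment_of_apply_le {w : E →L[ℝ] ℝ} (hw : w ≠ 0) (hx : w x = w z) (hy : w y = w z)
    (hxz : φ x < φ z) (hzy : φ z ≤ φ y) : z ∈ segment ℝ x y := by
  have hne : y - x ≠ 0 := sub_ne_zero.mpr (by rintro rfl; exact hzy.not_gt hxz)
  obtain ⟨c, hc⟩ := exists_eq_smul_of_apply_eq_zero (x := z - x) hw hne
    (by rw [map_sub, hx, hy, sub_self]) (by rw [map_sub, hx, sub_self])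
  have hφ : φ z - φ x = c * (φ y - φ x) := by simpa using congrArg φ hc
  rw [segment_eq_image']
  refine ⟨c, ⟨?_, ?_⟩, by simp only [← hc, add_sub_cancel]⟩ <;> nlinarith

end Plane

theorem one_sub_mem_Icc {a b s : ℝ} : 1 - s ∈ Icc a b ↔ s ∈ Icc (1 - b) (1 - a) := by
  simp only [mem_Icc]
  constructor <;> rintro ⟨_, _⟩ <;> constructor <;> linarith

theorem image_comp_one_sub {α : Type*} (γ : ℝ → α) :
    (fun s => γ (1 - s)) '' Icc 0 1 = γ '' Icc 0 1 := by
  rw [← image_image γ (fun s => 1 - s), image_const_sub_Icc, sub_self, sub_zero]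

section Arcs

variable {E : Type*} [NormedAddCommGroup E] [NormedSpace ℝ E] {P : Set E} {R B : ℝ → E}
  {φ : E →L[ℝ] ℝ} {s t : ℝ} {i : E}

/-- A convex body `P` whose boundary is cut by two points into the simple arcs `R` and `B`, both
parametrised by `[0, 1]` from the first point to the second. -/
structure BoundingArcs (P : Set E) (R B : ℝ → E) : Prop where
  isCompact : IsCompact P
  convex : Convex ℝ P
  interior_nonempty : (interior P).Nonempty
  continuousOn_left : ContinuousOn R (Icc 0 1)
  continuousOn_right : ContinuousOn B (Icc 0 1)
  injOn_left : InjOn R (Icc 0 1)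
  injOn_right : InjOn B (Icc 0 1)
  start_eq : R 0 = B 0
  end_eq : R 1 = B 1
  image_union : R '' Icc 0 1 ∪ B '' Icc 0 1 = frontier P
  image_inter : R '' Icc 0 1 ∩ B '' Icc 0 1 = {R 0, R 1}

/-- The level line of `φ` through `R s` and `B t` separates the parts of the two arcs before
these points from the parts after them. -/
structure Separates (φ : E →L[ℝ] ℝ) (R B : ℝ → E) (s t : ℝ) : Prop where
  level_eq : φ (R s) = φ (B t)
  left_le : ∀ s' ∈ Icc 0 s, φ (R s') ≤ φ (R s)
  right_le : ∀ t' ∈ Icc 0 t, φ (B t') ≤ φ (B t)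
  le_left : ∀ s' ∈ Icc s 1, φ (R s) ≤ φ (R s')
  le_right : ∀ t' ∈ Icc t 1, φ (B t) ≤ φ (B t')

namespace Separates

protected theorem swap (h : Separates φ R B s t) : Separates φ B R t s :=
  ⟨h.level_eq.symm, h.right_le, h.left_le, h.le_right, h.le_left⟩

protected theorem reverse (h : Separates φ R B s t) :
    Separates (-φ) (fun s => R (1 - s)) (fun s => B (1 - s)) (1 - s) (1 - t) where
  level_eq := by simp [h.level_eq]
  left_le s' hs' := by
    simpa using h.le_left (1 - s') (one_sub_mem_Icc.mpr (by simpa using hs'))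
  right_le t' ht' := by
    simpa using h.le_right (1 - t') (one_sub_mem_Icc.mpr (by simpa using ht'))
  le_left s' hs' := by
    simpa using h.left_le (1 - s') (one_sub_mem_Icc.mpr (by simpa using hs'))
  le_right t' ht' := by
    simpa using h.right_le (1 - t') (one_sub_mem_Icc.mpr (by simpa using ht'))

theorem smul {c : ℝ} (hsep : Separates φ R B s t) (hc : 0 ≤ c) :
    Separates (c • φ) R B s t where
  level_eq := congrArg (c • ·) hsep.level_eq
  left_le a ha := mul_le_mul_of_nonneg_left (hsep.left_le a ha) hc
  right_le a ha := mul_le_mul_of_nonneg_left (hsep.right_le a ha) hc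
  le_left a ha := mul_le_mul_of_nonneg_left (hsep.le_left a ha) hc
  le_right a ha := mul_le_mul_of_nonneg_left (hsep.le_right a ha) hc

end Separates

namespace BoundingArcs

protected theorem swap (h : BoundingArcs P R B) : BoundingArcs P B R where
  isCompact := h.isCompact
  convex := h.convex
  interior_nonempty := h.interior_nonempty
  continuousOn_left := h.continuousOn_right
  continuousOn_right := h.continuousOn_left
  injOn_left := h.injOn_right
  injOn_right := h.injOn_left
  start_eq := h.start_eq.symm
  end_eq := h.end_eq.symm
  image_union := by rw [union_comm, h.image_union]
  image_inter := by rw [inter_comm, h.image_inter, h.start_eq, h.end_eq]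

protected theorem reverse (h : BoundingArcs P R B) :
    BoundingArcs P (fun s => R (1 - s)) (fun s => B (1 - s)) := by
  have hmaps : MapsTo (fun s : ℝ => 1 - s) (Icc 0 1) (Icc 0 1) := fun s hs =>
    one_sub_mem_Icc.mpr (by simpa using hs)
  have hinj : InjOn (fun s : ℝ => 1 - s) (Icc 0 1) := sub_right_injective.injOn
  exact
  { isCompact := h.isCompact
    convex := h.convex
    interior_nonempty := h.interior_nonempty
    continuousOn_left := h.continuousOn_left.comp (by fun_prop) hmaps
    continuousOn_right := h.continuousOn_right.comp (by fun_prop) hmaps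
    injOn_left := h.injOn_left.comp hinj hmaps
    injOn_right := h.injOn_right.comp hinj hmaps
    start_eq := by simpa using h.end_eq
    end_eq := by simpa using h.start_eq
    image_union := by rw [image_comp_one_sub, image_comp_one_sub, h.image_union]
    image_inter := by
      rw [image_comp_one_sub, image_comp_one_sub, h.image_inter, pair_comm, sub_zero, sub_self] }

theorem left_mem_frontier (h : BoundingArcs P R B) (hs : s ∈ Icc (0 : ℝ) 1) : R s ∈ frontier P :=
  h.image_union ▸ Or.inl (mem_image_of_mem R hs)

theorem right_mem_frontier (h : BoundingArcs P R B) (ht : t ∈ Icc (0 : ℝ) 1) : B t ∈ frontier P :=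
  h.swap.left_mem_frontier ht

theorem left_mem (h : BoundingArcs P R B) (hs : s ∈ Icc (0 : ℝ) 1) : R s ∈ P :=
  h.isCompact.isClosed.frontier_subset (h.left_mem_frontier hs)

theorem right_mem (h : BoundingArcs P R B) (ht : t ∈ Icc (0 : ℝ) 1) : B t ∈ P :=
  h.swap.left_mem ht

theorem eq_zero_or_eq_one_of_eq (h : BoundingArcs P R B) (hs : s ∈ Icc (0 : ℝ) 1)
    (ht : t ∈ Icc (0 : ℝ) 1) (hst : R s = B t) : s = 0 ∧ t = 0 ∨ s = 1 ∧ t = 1 := by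
  have hmem : R s ∈ ({R 0, R 1} : Set E) :=
    h.image_inter ▸ ⟨mem_image_of_mem R hs, hst ▸ mem_image_of_mem B ht⟩
  rcases hmem with h0 | h1
  · exact Or.inl ⟨h.injOn_left hs (by simp) h0,
      h.injOn_right ht (by simp) (by rw [← hst, h0, h.start_eq])⟩
  · exact Or.inr ⟨h.injOn_left hs (by simp) h1,
      h.injOn_right ht (by simp) (by rw [← hst, h1, h.end_eq])⟩

theorem left_ne_right (h : BoundingArcs P R B) (hs : s ∈ Icc (0 : ℝ) 1)
    (ht : t ∈ Icc (0 : ℝ) 1) (hpos : 0 < s + t) (hlt : s + t < 2) : R s ≠ B t := by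
  intro heq
  rcases h.eq_zero_or_eq_one_of_eq hs ht heq with ⟨rfl, rfl⟩ | ⟨rfl, rfl⟩ <;> linarith

theorem start_ne_end (h : BoundingArcs P R B) : R 0 ≠ R 1 := fun heq =>
  zero_ne_one (h.injOn_left (by simp) (by simp) heq)

theorem exists_mem_interior_level_eq (h : BoundingArcs P R B) (hP : StrictConvex ℝ P)
    (hs : s ∈ Icc (0 : ℝ) 1) (ht : t ∈ Icc (0 : ℝ) 1) (hne : R s ≠ B t)
    (hlevel : φ (R s) = φ (B t)) : ∃ i ∈ interior P, φ (R s) = φ i ∧ φ (B t) = φ i := by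
  refine ⟨midpoint ℝ (R s) (B t), hP.openSegment_subset (h.left_mem hs) (h.right_mem ht) hne
    (midpoint_mem_openSegment _ _), ?_⟩
  rw [midpoint_eq_smul_add, map_smul, map_add, hlevel, smul_eq_mul, invOf_eq_inv]
  constructor <;> ring

theorem exists_lt_level (h : BoundingArcs P R B) (hφ : φ ≠ 0) (hi : i ∈ interior P) :
    (∃ s ∈ Icc (0 : ℝ) 1, φ (R s) < φ i) ∨ ∃ t ∈ Icc (0 : ℝ) 1, φ (B t) < φ i := by
  obtain ⟨z, hz, hlt⟩ := exists_mem_frontier_apply_lt h.isCompact hi hφ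
  rw [← h.image_union] at hz
  rcases hz with ⟨s, hs, rfl⟩ | ⟨t, ht, rfl⟩
  exacts [Or.inl ⟨s, hs, hlt⟩, Or.inr ⟨t, ht, hlt⟩]

end BoundingArcs

end Arcs

section Crossing

variable {E : Type*} [NormedAddCommGroup E] [InnerProductSpace ℝ E]
  [Fact (Module.finrank ℝ E = 2)] {P : Set E} {R B : ℝ → E} {φ : E →L[ℝ] ℝ} {s t s' : ℝ} {i : E}

namespace BoundingArcs

theorem eq_of_level_eq (h : BoundingArcs P R B) (hφ : φ ≠ 0) (hi : i ∈ interior P)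
    (hs : s ∈ Icc (0 : ℝ) 1) (ht : t ∈ Icc (0 : ℝ) 1) (hR : φ (R s) = φ i) (hB : φ (B t) = φ i)
    (hne : R s ≠ B t) (hs' : s' ∈ Icc (0 : ℝ) 1) (hR' : φ (R s') = φ i) :
    s' = s ∨ (s' = 0 ∧ t = 0 ∨ s' = 1 ∧ t = 1) :=
  (eq_or_eq_of_mem_frontier_of_apply_eq h.convex hφ hi (h.left_mem_frontier hs)
    (h.right_mem_frontier ht) (h.left_mem_frontier hs') hR hB hR' hne).imp
    (fun heq => h.injOn_left hs' hs heq) (h.eq_zero_or_eq_one_of_eq hs' ht)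

theorem left_same_side (h : BoundingArcs P R B) (hφ : φ ≠ 0) (hi : i ∈ interior P)
    (hs : s ∈ Icc (0 : ℝ) 1) (ht : t ∈ Icc (0 : ℝ) 1) (hR : φ (R s) = φ i) (hB : φ (B t) = φ i)
    (hne : R s ≠ B t) :
    (∀ s' ∈ Icc s 1, φ i ≤ φ (R s')) ∨ ∀ s' ∈ Icc s 1, φ (R s') ≤ φ i := by
  by_contra! ⟨⟨a, ha, hlt⟩, b, hb, hgt⟩
  have hsub : Icc s 1 ⊆ Icc 0 1 := Icc_subset_Icc_left hs.1
  obtain ⟨c, hc, hci⟩ := intermediate_value_uIcc (a := a) (b := b)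
    (φ.continuous.comp_continuousOn (h.continuousOn_left.mono
      ((uIcc_subset_Icc ha hb).trans hsub))) (mem_uIcc_of_le hlt.le hgt.le)
  have hca : c ≠ a := by rintro rfl; exact hlt.ne hci
  have hcb : c ≠ b := by rintro rfl; exact hgt.ne' hci
  have hcs : s < c ∧ c < 1 := by
    rcases mem_uIcc.mp hc with ⟨h1, h2⟩ | ⟨h1, h2⟩
    · exact ⟨ha.1.trans_lt (h1.lt_of_ne' hca), (h2.lt_of_ne hcb).trans_le hb.2⟩
    · exact ⟨hb.1.trans_lt (h1.lt_of_ne' hcb), (h2.lt_of_ne hca).trans_le ha.2⟩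
  rcases h.eq_of_level_eq hφ hi hs ht hR hB hne (hsub ⟨hcs.1.le, hcs.2.le⟩) hci with
    rfl | ⟨rfl, -⟩ | ⟨rfl, -⟩
  · exact hcs.1.false
  · exact hs.1.not_gt hcs.1
  · exact hcs.2.false

theorem later_same_side (h : BoundingArcs P R B) (hφ : φ ≠ 0) (hi : i ∈ interior P)
    (hs : s ∈ Icc (0 : ℝ) 1) (ht : t ∈ Icc (0 : ℝ) 1) (hR : φ (R s) = φ i) (hB : φ (B t) = φ i)
    (hne : R s ≠ B t) :
    ((∀ s' ∈ Icc s 1, φ i ≤ φ (R s')) ∧ ∀ t' ∈ Icc t 1, φ i ≤ φ (B t')) ∨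
      (∀ s' ∈ Icc s 1, φ (R s') ≤ φ i) ∧ ∀ t' ∈ Icc t 1, φ (B t') ≤ φ i := by
  have hend : φ (R 1) = φ i → s = 1 ∨ t = 1 := fun h1 =>
    (h.eq_of_level_eq hφ hi hs ht hR hB hne (by simp) h1).imp Eq.symm (by simp)
  have htrivial : ∀ {γ : ℝ → E} {a : ℝ}, a = 1 → φ (γ a) = φ i →
      ∀ a' ∈ Icc a 1, φ (γ a') = φ i := by
    rintro γ _ rfl ha a' ha'
    rw [Icc_self, mem_singleton_iff] at ha'
    rwa [ha']
  rcases h.left_same_side hφ hi hs ht hR hB hne with hl | hl <;>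
    rcases h.swap.left_same_side hφ hi ht hs hB hR hne.symm with hr | hr
  · exact Or.inl ⟨hl, hr⟩
  · rcases hend (((h.end_eq ▸ hr 1 ⟨ht.2, le_rfl⟩ : φ (R 1) ≤ _)).antisymm (hl 1 ⟨hs.2, le_rfl⟩))
      with hs1 | ht1
    · exact Or.inr ⟨fun s' hs' => (htrivial hs1 hR s' hs').le, hr⟩
    · exact Or.inl ⟨hl, fun t' ht' => (htrivial ht1 hB t' ht').ge⟩
  · rcases hend ((hl 1 ⟨hs.2, le_rfl⟩).antisymm (h.end_eq ▸ hr 1 ⟨ht.2, le_rfl⟩)) with hs1 | ht1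
    · exact Or.inl ⟨fun s' hs' => (htrivial hs1 hR s' hs').ge, hr⟩
    · exact Or.inr ⟨hl, fun t' ht' => (htrivial ht1 hB t' ht').le⟩
  · exact Or.inr ⟨hl, hr⟩

theorem earlier_same_side (h : BoundingArcs P R B) (hφ : φ ≠ 0) (hi : i ∈ interior P)
    (hs : s ∈ Icc (0 : ℝ) 1) (ht : t ∈ Icc (0 : ℝ) 1) (hR : φ (R s) = φ i) (hB : φ (B t) = φ i)
    (hne : R s ≠ B t) :
    ((∀ s' ∈ Icc 0 s, φ i ≤ φ (R s')) ∧ ∀ t' ∈ Icc 0 t, φ i ≤ φ (B t')) ∨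
      (∀ s' ∈ Icc 0 s, φ (R s') ≤ φ i) ∧ ∀ t' ∈ Icc 0 t, φ (B t') ≤ φ i := by
  have hback : ∀ {γ : ℝ → E} {a : ℝ} {p : ℝ → Prop}, (∀ a' ∈ Icc (1 - a) 1, p (φ (γ (1 - a')))) →
      ∀ a' ∈ Icc 0 a, p (φ (γ a')) := fun hp a' ha' => by
    simpa using hp (1 - a') (one_sub_mem_Icc.mpr (by simpa using ha'))
  refine (h.reverse.later_same_side hφ hi (s := 1 - s) (t := 1 - t)
    (one_sub_mem_Icc.mpr (by simpa using hs)) (one_sub_mem_Icc.mpr (by simpa using ht))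
    (by simpa using hR) (by simpa using hB) (by simpa using hne)).imp ?_ ?_
  · exact And.imp (hback (p := (φ i ≤ ·))) (hback (p := (φ i ≤ ·)))
  · exact And.imp (hback (p := (· ≤ φ i))) (hback (p := (· ≤ φ i)))

/-- The chord cuts the boundary into its earlier and its later part. Each lies on one side of
the line, and they lie on different sides because the body has interior points on the line. -/
theorem separates_or_separates_neg (h : BoundingArcs P R B) (hφ : φ ≠ 0) (hi : i ∈ interior P)
    (hs : s ∈ Icc (0 : ℝ) 1) (ht : t ∈ Icc (0 : ℝ) 1) (hR : φ (R s) = φ i) (hB : φ (B t) = φ i)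
    (hne : R s ≠ B t) : Separates φ R B s t ∨ Separates (-φ) R B s t := by
  have hall : ∀ {γ : ℝ → E} {a : ℝ} {p : ℝ → Prop}, (∀ a' ∈ Icc 0 a, p (φ (γ a'))) →
      (∀ a' ∈ Icc a 1, p (φ (γ a'))) → ∀ a' ∈ Icc (0 : ℝ) 1, p (φ (γ a')) :=
    fun hearly hlate a' ha' => (le_total a' _).elim (fun hle => hearly a' ⟨ha'.1, hle⟩)
      (fun hle => hlate a' ⟨hle, ha'.2⟩)
  rcases h.earlier_same_side hφ hi hs ht hR hB hne with ⟨hR₀, hB₀⟩ | ⟨hR₀, hB₀⟩ <;>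
    rcases h.later_same_side hφ hi hs ht hR hB hne with ⟨hR₁, hB₁⟩ | ⟨hR₁, hB₁⟩
  · rcases h.exists_lt_level hφ hi with ⟨a, ha, hlt⟩ | ⟨a, ha, hlt⟩
    · exact absurd hlt (hall (p := (φ i ≤ ·)) hR₀ hR₁ a ha).not_gt
    · exact absurd hlt (hall (p := (φ i ≤ ·)) hB₀ hB₁ a ha).not_gt
  · exact Or.inr ⟨congrArg Neg.neg (hR.trans hB.symm),
      fun a ha => neg_le_neg (hR.trans_le (hR₀ a ha)),
      fun a ha => neg_le_neg (hB.trans_le (hB₀ a ha)),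
      fun a ha => neg_le_neg ((hR₁ a ha).trans_eq hR.symm),
      fun a ha => neg_le_neg ((hB₁ a ha).trans_eq hB.symm)⟩
  · exact Or.inl ⟨hR.trans hB.symm,
      fun a ha => (hR₀ a ha).trans_eq hR.symm, fun a ha => (hB₀ a ha).trans_eq hB.symm,
      fun a ha => hR.trans_le (hR₁ a ha), fun a ha => hB.trans_le (hB₁ a ha)⟩
  · rcases h.exists_lt_level (neg_ne_zero.mpr hφ) hi with ⟨a, ha, hlt⟩ | ⟨a, ha, hlt⟩
    · exact absurd (neg_lt_neg_iff.mp hlt) (hall (p := (· ≤ φ i)) hR₀ hR₁ a ha).not_gt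
    · exact absurd (neg_lt_neg_iff.mp hlt) (hall (p := (· ≤ φ i)) hB₀ hB₁ a ha).not_gt

end BoundingArcs

end Crossing

section Reparametrisation

variable {f g : ℝ → ℝ} {τ : ℝ}

namespace IsRepar

theorem monotoneOn (hf : IsRepar f) : MonotoneOn f (Icc 0 1) := hf.1

theorem mem_Icc (hf : IsRepar f) (hτ : τ ∈ Icc (0 : ℝ) 1) : f τ ∈ Icc (0 : ℝ) 1 := hf.2.1 hτ

theorem map_zero (hf : IsRepar f) : f 0 = 0 := by
  obtain ⟨τ, hτ, hτ0⟩ := hf.2.2 (left_mem_Icc.mpr zero_le_one)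
  exact le_antisymm ((hf.monotoneOn (by simp) hτ hτ.1).trans_eq hτ0) (hf.mem_Icc (by simp)).1

theorem map_one (hf : IsRepar f) : f 1 = 1 := by
  obtain ⟨τ, hτ, hτ1⟩ := hf.2.2 (right_mem_Icc.mpr zero_le_one)
  exact le_antisymm (hf.mem_Icc (by simp)).2 (hτ1.symm.trans_le (hf.monotoneOn hτ (by simp) hτ.2))

theorem continuousOn (hf : IsRepar f) : ContinuousOn f (Icc 0 1) := by
  have hmono : Monotone (hf.2.1.restrict f (Icc 0 1) (Icc 0 1)) := fun x y hxy =>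
    hf.monotoneOn x.2 y.2 hxy
  have hcont := hmono.continuous_of_surjective (hf.2.1.restrict_surjective_iff.mpr hf.2.2)
  exact continuousOn_iff_continuous_domRestrict.mpr (continuous_subtype_val.comp hcont)

end IsRepar

theorem isRepar_of_continuousOn (hc : ContinuousOn f (Icc 0 1)) (hm : MonotoneOn f (Icc 0 1))
    (h0 : f 0 = 0) (h1 : f 1 = 1) : IsRepar f := by
  refine ⟨hm, fun τ hτ => ⟨?_, ?_⟩, ?_⟩
  · exact h0 ▸ hm (by simp) hτ hτ.1
  · exact h1 ▸ hm hτ (by simp) hτ.2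
  · exact (by rw [h0, h1] : Icc (f 0) (f 1) = Icc 0 1) ▸ intermediate_value_Icc zero_le_one hc

theorem isRepar_id : IsRepar id :=
  isRepar_of_continuousOn continuousOn_id monotoneOn_id rfl rfl

protected theorem IsRepar.reverse (hf : IsRepar f) : IsRepar fun τ => 1 - f (1 - τ) := by
  have hmaps : MapsTo (fun τ : ℝ => 1 - τ) (Icc 0 1) (Icc 0 1) := fun τ hτ =>
    one_sub_mem_Icc.mpr (by simpa using hτ)
  refine isRepar_of_continuousOn
    (continuousOn_const.sub (hf.continuousOn.comp (by fun_prop) hmaps)) ?_ ?_ ?_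
  · exact fun a ha b hb hab =>
      sub_le_sub_left (hf.monotoneOn (hmaps hb) (hmaps ha) (sub_le_sub_left hab 1)) 1
  · simp [hf.map_one]
  · simp [hf.map_zero]

theorem exists_add_eq (hf : IsRepar f) (hg : IsRepar g) {c : ℝ} (hc : c ∈ Icc (0 : ℝ) 2) :
    ∃ τ ∈ Icc (0 : ℝ) 1, f τ + g τ = c :=
  intermediate_value_Icc zero_le_one (hf.continuousOn.add hg.continuousOn)
    (by simpa [hf.map_zero, hg.map_zero, hf.map_one, hg.map_one, one_add_one_eq_two] using hc)

theorem ordConnected_setOf_add_mem_Ioo (hf : IsRepar f) (hg : IsRepar g) {a b : ℝ} :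
    {τ | τ ∈ Icc (0 : ℝ) 1 ∧ f τ + g τ ∈ Ioo a b}.OrdConnected := by
  have hmono := hf.monotoneOn.add hg.monotoneOn
  refine ⟨fun σ hσ ρ hρ τ hτ => ?_⟩
  have hτ1 : τ ∈ Icc (0 : ℝ) 1 := ⟨hσ.1.1.trans hτ.1, hτ.2.trans hρ.1.2⟩
  exact ⟨hτ1, hσ.2.1.trans_le (hmono hσ.1 hτ1 hτ.1), (hmono hτ1 hρ.1 hτ.2).trans_lt hρ.2.2⟩

theorem exists_add_mem_Ioo_and_le (hf : IsRepar f) (hg : IsRepar g) {η : ℝ} (hη : 0 < η) :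
    ∃ τ ∈ Icc (0 : ℝ) 1, f τ + g τ ∈ Ioo (0 : ℝ) 2 ∧ f τ ≤ η ∧ g τ ≤ η := by
  have hpos : 0 < min η 1 := lt_min hη one_pos
  have hη1 := min_le_left η 1
  have h1 := min_le_right η 1
  obtain ⟨τ, hτ, hsum⟩ := exists_add_eq hf hg (c := min η 1) ⟨hpos.le, h1.trans one_le_two⟩
  exact ⟨τ, hτ, hsum ▸ ⟨hpos, h1.trans_lt one_lt_two⟩, by linarith [(hg.mem_Icc hτ).1],
    by linarith [(hf.mem_Icc hτ).1]⟩

theorem exists_add_mem_Ioo_and_one_sub_le (hf : IsRepar f) (hg : IsRepar g) {η : ℝ}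
    (hη : 0 < η) :
    ∃ τ ∈ Icc (0 : ℝ) 1, f τ + g τ ∈ Ioo (0 : ℝ) 2 ∧ 1 - η ≤ f τ ∧ 1 - η ≤ g τ := by
  obtain ⟨τ, hτ, hsum, hfη, hgη⟩ := exists_add_mem_Ioo_and_le hf.reverse hg.reverse hη
  exact ⟨1 - τ, one_sub_mem_Icc.mpr (by simpa using hτ),
    ⟨by linarith [hsum.2], by linarith [hsum.1]⟩, by linarith, by linarith⟩

end Reparametrisation

section Antipodal

open scoped Pointwise

theorem exists_forall_le_mem_ball {X : Type*} [PseudoMetricSpace X] {γ : ℝ → X} {ε : ℝ}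
    (hγ : ContinuousOn γ (Icc 0 1)) (hε : 0 < ε) :
    ∃ η : ℝ, 0 < η ∧ ∀ s ∈ Icc (0 : ℝ) 1, s ≤ η → γ s ∈ Metric.ball (γ 0) ε := by
  obtain ⟨δ, hδ, hclose⟩ := Metric.continuousOn_iff.mp hγ 0 (by simp) ε hε
  refine ⟨δ / 2, half_pos hδ, fun s hs hsδ => hclose s hs ?_⟩
  rw [Real.dist_0_eq_abs, abs_of_nonneg hs.1]
  linarith

section LongestChord

variable {E : Type*} [NormedAddCommGroup E] [NormedSpace ℝ E] {P : Set E} {b r : E}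

theorem exists_supporting_strip (hP : Convex ℝ P) (hint : (interior P).Nonempty)
    (hr : r ∈ P) (hb : b ∈ P) (hrb : r - b ∉ interior P - interior P) :
    ∃ w : E →L[ℝ] ℝ, 0 < w (r - b) ∧ ∀ x ∈ P, w b ≤ w x ∧ w x ≤ w r := by
  obtain ⟨w, hw⟩ := geometric_hahn_banach_open_point (hP.interior.sub hP.interior)
    isOpen_interior.sub_right hrb
  have hclosed : ∀ x ∈ P, ∀ y ∈ P, w (x - y) ≤ w (r - b) := by
    have hcl : P ⊆ closure (interior P) :=
      subset_closure.trans (hP.closure_interior_eq_closure_of_nonempty_interior hint).ge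
    intro x hx y hy
    have hmem : (x, y) ∈ closure (interior P ×ˢ interior P) := by
      rw [closure_prod_eq]
      exact ⟨hcl hx, hcl hy⟩
    refine closure_minimal (s := interior P ×ˢ interior P)
      (t := {p | w (p.1 - p.2) ≤ w (r - b)}) ?_ (isClosed_le (by fun_prop) continuous_const) hmem
    rintro ⟨x, y⟩ ⟨hx, hy⟩
    exact (hw _ (sub_mem_sub hx hy)).le
  obtain ⟨i, hi⟩ := hint
  refine ⟨w, by simpa using hw _ (sub_mem_sub hi hi), fun x hx => ⟨?_, ?_⟩⟩
  · have := hclosed r hr x hx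
    rw [map_sub, map_sub] at this
    linarith
  · have := hclosed x hx b hb
    rw [map_sub, map_sub] at this
    linarith

end LongestChord

section Plane

variable {E : Type*} [NormedAddCommGroup E] [InnerProductSpace ℝ E]
  [Fact (Module.finrank ℝ E = 2)] {P : Set E} {R B : ℝ → E} {φ : E →L[ℝ] ℝ} {b y y' D : E}
  {s t : ℝ}

theorem Separates.mem_image_of_apply_eq (hsep : Separates φ R B s t) (h : BoundingArcs P R B)
    (hφ : φ ≠ 0) (hs : s ∈ Icc (0 : ℝ) 1) (ht : t ∈ Icc (0 : ℝ) 1) (hne : R s ≠ B t)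
    (hy : y ∈ interior P) (hyt : φ y ≤ φ (B t)) {z : E} (hz : z ∈ frontier P) (hzy : φ z = φ y) :
    z ∈ R '' Icc 0 s ∪ B '' Icc 0 t := by
  rcases hyt.lt_or_eq with hlt | heq
  · rw [← h.image_union] at hz
    rcases hz with ⟨a, ha, rfl⟩ | ⟨a, ha, rfl⟩
    · refine Or.inl ⟨a, ⟨ha.1, not_lt.mp fun hsa => ?_⟩, rfl⟩
      linarith [hsep.le_left a ⟨hsa.le, ha.2⟩, hsep.level_eq]
    · refine Or.inr ⟨a, ⟨ha.1, not_lt.mp fun hta => ?_⟩, rfl⟩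
      linarith [hsep.le_right a ⟨hta.le, ha.2⟩]
  · rcases eq_or_eq_of_mem_frontier_of_apply_eq h.convex hφ hy (h.left_mem_frontier hs)
      (h.right_mem_frontier ht) hz (hsep.level_eq.trans heq.symm) heq.symm hzy hne with rfl | rfl
    · exact Or.inl ⟨s, ⟨hs.1, le_rfl⟩, rfl⟩
    · exact Or.inr ⟨t, ⟨ht.1, le_rfl⟩, rfl⟩

/-- The line through `i` parallel to the chord meets the boundary on both sides of `i`. If `i`
were not beyond the chord, both points would lie on the arcs already traversed, hence so close
to the start point that `i` would be close to it as well. -/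
theorem Separates.lt_apply_of_subset_ball (hsep : Separates φ R B s t) (h : BoundingArcs P R B)
    (hφ : φ ≠ 0) (hs : s ∈ Icc (0 : ℝ) 1) (ht : t ∈ Icc (0 : ℝ) 1) (hne : R s ≠ B t) {K : Set E}
    (hK : Convex ℝ K) (hRK : R '' Icc 0 s ⊆ K) (hBK : B '' Icc 0 t ⊆ K)
    (hy : y ∈ interior P) (hyK : y ∉ K) : φ (B t) < φ y := by
  by_contra! hle
  have hD : R s - B t ≠ 0 := sub_ne_zero.mpr hne
  have hφD : φ (R s - B t) = 0 := by rw [map_sub, hsep.level_eq, sub_self]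
  have hmem : ∀ k : ℝ, y + k • (R s - B t) ∈ frontier P → y + k • (R s - B t) ∈ K := by
    intro k hk
    refine union_subset hRK hBK
      (hsep.mem_image_of_apply_eq h hφ hs ht hne hy hle hk ?_)
    rw [map_add, map_smul, hφD, smul_zero, add_zero]
  obtain ⟨k, hk, hkP⟩ := exists_pos_add_smul_mem_frontier h.isCompact.isBounded hy hD
  obtain ⟨l, hl, hlP⟩ :=
    exists_pos_add_smul_mem_frontier h.isCompact.isBounded hy (neg_ne_zero.mpr hD)
  rw [smul_neg, ← neg_smul] at hlP
  refine hyK (hK.segment_subset (hmem k hkP) (hmem (-l) hlP) ?_)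
  refine ⟨l / (k + l), k / (k + l), by positivity, by positivity, by field_simp; ring, ?_⟩
  match_scalars <;> field_simp <;> ring

theorem BoundingArcs.exists_parallel_interior_chord_near_start (h : BoundingArcs P R B) :
    ∃ η : ℝ, 0 < η ∧ ∀ φ : E →L[ℝ] ℝ, φ ≠ 0 → ∀ s ∈ Icc (0 : ℝ) 1, ∀ t ∈ Icc (0 : ℝ) 1,
      s ≤ η → t ≤ η → R s ≠ B t → Separates φ R B s t →
      ∃ y ∈ interior P, y + (R s - B t) ∈ interior P ∧ φ (B t) < φ y := by
  obtain ⟨y, hy⟩ := h.interior_nonempty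
  obtain ⟨ρ, hρ, hball⟩ := Metric.isOpen_iff.mp isOpen_interior y hy
  obtain ⟨η, hη, hR⟩ := exists_forall_le_mem_ball h.continuousOn_left (half_pos hρ)
  obtain ⟨ν, hν, hB⟩ := exists_forall_le_mem_ball h.continuousOn_right (half_pos hρ)
  rw [← h.start_eq] at hB
  have hfar : y ∉ Metric.ball (R 0) (ρ / 2) := fun hy0 =>
    (h.left_mem_frontier (s := 0) (by simp)).2
      (hball (Metric.ball_subset_ball (half_le_self hρ.le) (Metric.mem_ball_comm.mp hy0)))
  refine ⟨min η ν, lt_min hη hν, fun φ hφ s hs t ht hsη htη hne hsep => ⟨y, hy, hball ?_, ?_⟩⟩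
  · have hs' := Metric.mem_ball.mp (hR s hs (hsη.trans (min_le_left _ _)))
    have ht' := Metric.mem_ball.mp (hB t ht (htη.trans (min_le_right _ _)))
    rw [mem_ball_iff_norm, add_sub_cancel_left, ← dist_eq_norm]
    linarith [dist_triangle_right (R s) (B t) (R 0)]
  · refine hsep.lt_apply_of_subset_ball h hφ hs ht hne (convex_ball (R 0) (ρ / 2)) ?_ ?_ hy hfar
    · rintro _ ⟨a, ha, rfl⟩
      exact hR a ⟨ha.1, ha.2.trans hs.2⟩ (ha.2.trans (hsη.trans (min_le_left _ _)))
    · rintro _ ⟨a, ha, rfl⟩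
      exact hB a ⟨ha.1, ha.2.trans ht.2⟩ (ha.2.trans (htη.trans (min_le_right _ _)))

theorem level_ne_of_parallel_interior_chord (hP : Convex ℝ P) (hb : b ∈ frontier P)
    (hbD : b + D ∈ frontier P) (hφ : φ ≠ 0) (hD : D ≠ 0) (hφD : φ D = 0)
    (hy : y ∈ interior P) (hyD : y + D ∈ interior P) : φ y ≠ φ b := by
  intro hyb
  obtain ⟨k, hk⟩ := exists_eq_smul_of_apply_eq_zero (x := y - b) hφ hD hφD
    (by rw [map_sub, hyb, sub_self])
  obtain rfl : y = b + k • D := by rw [← hk, add_sub_cancel]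
  rcases le_or_gt 0 k with hk0 | hk0
  · refine hbD.2 ?_
    convert lineMap_mem_interior (k := k / (k + 1)) hP hyD hb.1 (by positivity)
      ((div_lt_one (by positivity)).mpr (lt_add_one k)) using 1
    rw [AffineMap.lineMap_apply_module']
    match_scalars <;> field_simp <;> ring
  · refine hb.2 ?_
    convert lineMap_mem_interior (k := -k / (1 - k)) hP hy hbD.1
      (div_nonneg (by linarith) (by linarith))
      ((div_lt_one (by linarith)).mpr (by linarith)) using 1
    have : 1 - k ≠ 0 := by linarith
    rw [AffineMap.lineMap_apply_module']
    match_scalars <;> field_simp <;> ring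

theorem parallel_interior_chords_same_side (hP : Convex ℝ P) (hb : b ∈ frontier P)
    (hbD : b + D ∈ frontier P) (hφ : φ ≠ 0) (hD : D ≠ 0) (hφD : φ D = 0)
    (hy : y ∈ interior P) (hyD : y + D ∈ interior P) (hyb : φ y < φ b)
    (hy' : y' ∈ interior P) (hyD' : y' + D ∈ interior P) : φ y' < φ b := by
  have hconv : Convex ℝ (interior P ∩ (fun x => x + D) ⁻¹' interior P) :=
    hP.interior.inter (hP.interior.translate_preimage_left D)
  by_contra! hle
  obtain ⟨x, ⟨hx, hxD⟩, hxb⟩ := hconv.isPreconnected.intermediate_value ⟨hy, hyD⟩ ⟨hy', hyD'⟩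
    φ.continuous.continuousOn ⟨hyb.le, hle⟩
  exact level_ne_of_parallel_interior_chord hP hb hbD hφ hD hφD hx hxD hxb

/-- If every chord had a parallel translate in the interior, then those with a translate before
them and those with a translate after them would form two disjoint open sets of parameters. -/
theorem exists_sub_notMem_interior_sub_interior {X : Type*} [TopologicalSpace X]
    [PreconnectedSpace X] (hP : Convex ℝ P) {b D : X → E} {Φ : X → E →L[ℝ] ℝ}
    (hbc : Continuous b) (hDc : Continuous D) (hΦc : Continuous Φ)
    (hb : ∀ x, b x ∈ frontier P) (hbD : ∀ x, b x + D x ∈ frontier P) (hΦ : ∀ x, Φ x ≠ 0)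
    (hD : ∀ x, D x ≠ 0) (hΦD : ∀ x, Φ x (D x) = 0)
    (hbefore : ∃ x, ∃ y ∈ interior P, y + D x ∈ interior P ∧ Φ x y < Φ x (b x))
    (hafter : ∃ x, ∃ y ∈ interior P, y + D x ∈ interior P ∧ Φ x (b x) < Φ x y) :
    ∃ x, D x ∉ interior P - interior P := by
  by_contra! hall
  have hopen : ∀ Ψ : X → E →L[ℝ] ℝ, Continuous Ψ →
      IsOpen {x | ∃ y ∈ interior P, y + D x ∈ interior P ∧ Ψ x y < Ψ x (b x)} := by
    intro Ψ hΨ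
    simp only [ofPred_exists, ofPred_and]
    refine isOpen_iUnion fun y => isOpen_const.inter (IsOpen.inter ?_ ?_)
    · exact isOpen_interior.preimage (continuous_const.add hDc)
    · exact isOpen_lt (hΨ.clm_apply continuous_const) (hΨ.clm_apply hbc)
  have hcover : {x | ∃ y ∈ interior P, y + D x ∈ interior P ∧ Φ x y < Φ x (b x)} ∪
      {x | ∃ y ∈ interior P, y + D x ∈ interior P ∧ (-Φ) x y < (-Φ) x (b x)} = univ := by
    refine eq_univ_of_forall fun x => ?_
    obtain ⟨z, hz, y, hy, hzy⟩ := hall x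
    have hyD : y + D x ∈ interior P := by rwa [← hzy, add_sub_cancel]
    rcases (level_ne_of_parallel_interior_chord hP (hb x) (hbD x) (hΦ x) (hD x) (hΦD x)
      hy hyD).lt_or_gt with hlt | hgt
    · exact Or.inl ⟨y, hy, hyD, hlt⟩
    · exact Or.inr ⟨y, hy, hyD, neg_lt_neg hgt⟩
  obtain ⟨x, y, hy, hyD, hyb⟩ := hafter
  obtain ⟨x, ⟨y, hy, hyD, hyb⟩, y', hy', hyD', hyb'⟩ :=
    nonempty_inter (hopen Φ hΦc) (hopen (-Φ) hΦc.neg) hcover hbefore ⟨x, y, hy, hyD, neg_lt_neg hyb⟩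
  exact hyb'.not_gt (neg_lt_neg (parallel_interior_chords_same_side hP (hb x) (hbD x) (hΦ x)
    (hD x) (hΦD x) hy hyD hyb hy' hyD'))

end Plane

end Antipodal

section AntipodalPair

open scoped Pointwise

variable {E : Type*} [NormedAddCommGroup E] [InnerProductSpace ℝ E]
  [Fact (Module.finrank ℝ E = 2)] {P : Set E} {R B : ℝ → E} {φ : E →L[ℝ] ℝ} {s t : ℝ}
  {f g : ℝ → ℝ} (o : Orientation ℝ E (Fin 2))

local notation "ω" => Orientation.areaForm' o

theorem areaForm'_self (x : E) : ω x x = 0 := o.areaForm_apply_self x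

theorem areaForm'_ne_zero {x : E} (hx : x ≠ 0) : ω x ≠ 0 := fun h =>
  hx (inner_self_eq_zero.mp
    ((o.areaForm_rightAngleRotation_right x x).symm.trans
      (DFunLike.congr_fun h (o.rightAngleRotation x))))

/-- How far the two arcs move on from the parameters `s` and `t`, measured half-way to the end. -/
def advance (R B : ℝ → E) (s t : ℝ) : E :=
  R ((1 + s) / 2) + B ((1 + t) / 2) - R s - B t

/-- The chord `R s - B t`, scaled so that the area form with it increases along both arcs. -/
def chordDirection (R B : ℝ → E) (s t : ℝ) : E :=
  ω (R s - B t) (advance R B s t) • (R s - B t)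

/-- `R s` and `B t` are antipodal points of `P`: they lie on opposite sides of the strip cut out
by the levels of `w`, and the line through them, which has the direction `u`, separates the
earlier parts of the two arcs from the later ones. -/
structure IsAntipodal (P : Set E) (R B : ℝ → E) (w : E →L[ℝ] ℝ) (u : E) (s t : ℝ) : Prop where
  left_mem : s ∈ Icc (0 : ℝ) 1
  right_mem : t ∈ Icc (0 : ℝ) 1
  lt : w (B t) < w (R s)
  strip : ∀ x ∈ P, w (B t) ≤ w x ∧ w x ≤ w (R s)
  dir_ne_zero : u ≠ 0
  separates : Separates (ω u) R B s t

namespace IsAntipodal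

variable {o} {w : E →L[ℝ] ℝ} {u : E}

protected theorem swap (hst : IsAntipodal o P R B w u s t) : IsAntipodal o P B R (-w) u t s where
  left_mem := hst.right_mem
  right_mem := hst.left_mem
  lt := neg_lt_neg hst.lt
  strip x hx := ⟨neg_le_neg (hst.strip x hx).2, neg_le_neg (hst.strip x hx).1⟩
  dir_ne_zero := hst.dir_ne_zero
  separates := hst.separates.swap

protected theorem reverse (hst : IsAntipodal o P R B w u s t) :
    IsAntipodal o P (fun s => R (1 - s)) (fun s => B (1 - s)) w (-u) (1 - s) (1 - t) where
  left_mem := one_sub_mem_Icc.mpr (by simpa using hst.left_mem)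
  right_mem := one_sub_mem_Icc.mpr (by simpa using hst.right_mem)
  lt := by simpa using hst.lt
  strip := by simpa using hst.strip
  dir_ne_zero := neg_ne_zero.mpr hst.dir_ne_zero
  separates := by simpa only [map_neg] using hst.separates.reverse

end IsAntipodal

namespace BoundingArcs

theorem apply_advance_pos (h : BoundingArcs P R B) (hP : StrictConvex ℝ P) (hφ : φ ≠ 0)
    (hs : s ∈ Icc (0 : ℝ) 1) (ht : t ∈ Icc (0 : ℝ) 1) (hne : R s ≠ B t) (hlt : s + t < 2)
    (hsep : Separates φ R B s t) : 0 < φ (advance R B s t) := by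
  obtain ⟨i, hi, hRi, hBi⟩ := h.exists_mem_interior_level_eq hP hs ht hne hsep.level_eq
  have hs' : (1 + s) / 2 ∈ Icc s 1 := ⟨by linarith [hs.2], by linarith [hs.2]⟩
  have ht' : (1 + t) / 2 ∈ Icc t 1 := ⟨by linarith [ht.2], by linarith [ht.2]⟩
  have hR := hsep.le_left _ hs'
  have hB := hsep.le_right _ ht'
  simp only [advance, map_sub, map_add]
  by_contra! hle
  have hs1 : s = 1 := by
    rcases h.eq_of_level_eq hφ hi hs ht hRi hBi hne ⟨hs.1.trans hs'.1, hs'.2⟩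
      (by linarith) with heq | ⟨heq, -⟩ | ⟨heq, -⟩ <;> linarith [hs.1]
  have ht1 : t = 1 := by
    rcases h.swap.eq_of_level_eq hφ hi ht hs hBi hRi hne.symm ⟨ht.1.trans ht'.1, ht'.2⟩
      (by linarith) with heq | ⟨heq, -⟩ | ⟨heq, -⟩ <;> linarith [ht.1]
  linarith

theorem chordDirection_ne_zero_and_separates (h : BoundingArcs P R B) (hP : StrictConvex ℝ P)
    (hs : s ∈ Icc (0 : ℝ) 1) (ht : t ∈ Icc (0 : ℝ) 1) (hne : R s ≠ B t) (hlt : s + t < 2) :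
    chordDirection o R B s t ≠ 0 ∧ Separates (ω (chordDirection o R B s t)) R B s t := by
  have hD : R s - B t ≠ 0 := sub_ne_zero.mpr hne
  have hω : ω (R s - B t) ≠ 0 := areaForm'_ne_zero o hD
  have hlevel : ω (R s - B t) (R s) = ω (R s - B t) (B t) := by
    rw [← sub_eq_zero, ← map_sub, areaForm'_self]
  obtain ⟨i, hi, hRi, hBi⟩ := h.exists_mem_interior_level_eq hP hs ht hne hlevel
  rw [chordDirection, map_smul]
  rcases h.separates_or_separates_neg hω hi hs ht hRi hBi hne with hsep | hsep
  · have hpos := h.apply_advance_pos hP hω hs ht hne hlt hsep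
    exact ⟨smul_ne_zero hpos.ne' hD, hsep.smul hpos.le⟩
  · have hneg := neg_pos.mp (h.apply_advance_pos hP (neg_ne_zero.mpr hω) hs ht hne hlt hsep)
    refine ⟨smul_ne_zero hneg.ne hD, ?_⟩
    have hsep' := hsep.smul (neg_nonneg.mpr hneg.le)
    rwa [neg_smul_neg] at hsep'

theorem continuousOn_chordDirection (h : BoundingArcs P R B) {S : Set ℝ}
    (hf : ContinuousOn f S) (hg : ContinuousOn g S) (hfS : MapsTo f S (Icc 0 1))
    (hgS : MapsTo g S (Icc 0 1)) :
    ContinuousOn (fun τ => chordDirection o R B (f τ) (g τ)) S := by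
  have hhalf : ∀ {a : ℝ → ℝ}, MapsTo a S (Icc 0 1) →
      MapsTo (fun τ => (1 + a τ) / 2) S (Icc 0 1) := fun ha τ hτ =>
    ⟨by linarith [(ha hτ).1], by linarith [(ha hτ).2]⟩
  have hR := h.continuousOn_left.comp hf hfS
  have hB := h.continuousOn_right.comp hg hgS
  have hR' := h.continuousOn_left.comp ((continuousOn_const.add hf).div_const 2) (hhalf hfS)
  have hB' := h.continuousOn_right.comp ((continuousOn_const.add hg).div_const 2) (hhalf hgS)
  exact (((ω).continuous.comp_continuousOn (hR.sub hB)).clm_apply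
    (((hR'.add hB').sub hR).sub hB)).smul (hR.sub hB)

theorem exists_parallel_interior_chord_near_end (h : BoundingArcs P R B) :
    ∃ η : ℝ, 0 < η ∧ ∀ φ : E →L[ℝ] ℝ, φ ≠ 0 → ∀ s ∈ Icc (0 : ℝ) 1, ∀ t ∈ Icc (0 : ℝ) 1,
      1 - η ≤ s → 1 - η ≤ t → R s ≠ B t → Separates φ R B s t →
      ∃ y ∈ interior P, y + (R s - B t) ∈ interior P ∧ φ y < φ (B t) := by
  obtain ⟨η, hη, hnear⟩ := h.reverse.exists_parallel_interior_chord_near_start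
  refine ⟨η, hη, fun φ hφ s hs t ht hsη htη hne hsep => ?_⟩
  simpa using hnear (-φ) (neg_ne_zero.mpr hφ) (1 - s) (one_sub_mem_Icc.mpr (by simpa using hs))
    (1 - t) (one_sub_mem_Icc.mpr (by simpa using ht)) (by linarith) (by linarith)
    (by simpa using hne) hsep.reverse

theorem exists_chord_notMem_interior_sub_interior (h : BoundingArcs P R B)
    (hP : StrictConvex ℝ P) (hf : IsRepar f) (hg : IsRepar g) :
    ∃ τ ∈ Icc (0 : ℝ) 1, R (f τ) - B (g τ) ∉ interior P - interior P ∧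
      chordDirection o R B (f τ) (g τ) ≠ 0 ∧
      Separates (ω (chordDirection o R B (f τ) (g τ))) R B (f τ) (g τ) := by
  set J : Set ℝ := {τ | τ ∈ Icc (0 : ℝ) 1 ∧ f τ + g τ ∈ Ioo (0 : ℝ) 2}
  have := isPreconnected_iff_preconnectedSpace.mp
    (ordConnected_setOf_add_mem_Ioo hf hg (a := 0) (b := 2)).isPreconnected
  have hJf : ContinuousOn f J := hf.continuousOn.mono fun τ hτ => hτ.1
  have hJg : ContinuousOn g J := hg.continuousOn.mono fun τ hτ => hτ.1
  have hfJ : MapsTo f J (Icc 0 1) := fun τ hτ => hf.mem_Icc hτ.1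
  have hgJ : MapsTo g J (Icc 0 1) := fun τ hτ => hg.mem_Icc hτ.1
  have hne : ∀ τ : J, R (f τ) ≠ B (g τ) := fun τ =>
    h.left_ne_right (hfJ τ.2) (hgJ τ.2) τ.2.2.1 τ.2.2.2
  have hdir := fun τ : J => h.chordDirection_ne_zero_and_separates o hP (hfJ τ.2) (hgJ τ.2)
    (hne τ) τ.2.2.2
  have hω := fun τ : J => areaForm'_ne_zero o (hdir τ).1
  obtain ⟨η, hη, hstart⟩ := h.exists_parallel_interior_chord_near_start
  obtain ⟨ν, hν, hend⟩ := h.exists_parallel_interior_chord_near_end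
  obtain ⟨α, hα, hαsum, hfα, hgα⟩ := exists_add_mem_Ioo_and_le hf hg hη
  obtain ⟨β, hβ, hβsum, hfβ, hgβ⟩ := exists_add_mem_Ioo_and_one_sub_le hf hg hν
  let α' : J := ⟨α, hα, hαsum⟩
  let β' : J := ⟨β, hβ, hβsum⟩
  have hbR : ∀ τ : J, B (g τ) + (R (f τ) - B (g τ)) = R (f τ) := fun τ => add_sub_cancel _ _
  obtain ⟨τ, hτ⟩ := exists_sub_notMem_interior_sub_interior (X := J) h.convex
    (b := fun τ => B (g τ)) (D := fun τ => R (f τ) - B (g τ))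
    (Φ := fun τ => ω (chordDirection o R B (f τ) (g τ)))
    (h.continuousOn_right.comp hJg hgJ).domRestrict
    ((h.continuousOn_left.comp hJf hfJ).sub (h.continuousOn_right.comp hJg hgJ)).domRestrict
    ((ω).continuous.comp (h.continuousOn_chordDirection o hJf hJg hfJ hgJ).domRestrict)
    (fun τ => h.right_mem_frontier (hgJ τ.2))
    (fun τ => (hbR τ).symm ▸ h.left_mem_frontier (hfJ τ.2)) hω
    (fun τ => sub_ne_zero.mpr (hne τ))
    (fun τ => by rw [chordDirection, map_smul, smul_apply, areaForm'_self, smul_zero])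
    ⟨β', hend _ (hω β') _ (hfJ β'.2) _ (hgJ β'.2) hfβ hgβ (hne β') (hdir β').2⟩
    ⟨α', hstart _ (hω α') _ (hfJ α'.2) _ (hgJ α'.2) hfα hgα (hne α') (hdir α').2⟩
  exact ⟨τ, τ.2.1, hτ, hdir τ⟩

theorem exists_isAntipodal (h : BoundingArcs P R B) (hP : StrictConvex ℝ P) (hf : IsRepar f)
    (hg : IsRepar g) : ∃ τ ∈ Icc (0 : ℝ) 1, ∃ w u, IsAntipodal o P R B w u (f τ) (g τ) := by
  obtain ⟨τ, hτ, hlong, hdir, hsep⟩ := h.exists_chord_notMem_interior_sub_interior o hP hf hg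
  obtain ⟨w, hpos, hstrip⟩ := exists_supporting_strip h.convex h.interior_nonempty
    (h.left_mem (hf.mem_Icc hτ)) (h.right_mem (hg.mem_Icc hτ)) hlong
  exact ⟨τ, hτ, w, _, hf.mem_Icc hτ, hg.mem_Icc hτ, by simpa using hpos, hstrip, hdir, hsep⟩

end BoundingArcs

end AntipodalPair

section Fan

variable {E : Type*} [NormedAddCommGroup E] [InnerProductSpace ℝ E]
  [Fact (Module.finrank ℝ E = 2)] {P : Set E} {R B : ℝ → E} {w : E →L[ℝ] ℝ}
  {o : Orientation ℝ E (Fin 2)} {u y : E} {s t s' t' C : ℝ}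

local notation "ω" => Orientation.areaForm' o

namespace IsAntipodal

theorem width_ne_zero (hst : IsAntipodal o P R B w u s t) : w ≠ 0 := by
  rintro rfl
  exact hst.lt.false

theorem right_apply_le_start (hst : IsAntipodal o P R B w u s t) (h : BoundingArcs P R B)
    (ht' : t' ∈ Icc 0 t) : w (B t') ≤ w (R 0) := by
  have h0 : (0 : ℝ) ∈ Icc (0 : ℝ) 1 := by simp
  have ht'1 : t' ∈ Icc (0 : ℝ) 1 := ⟨ht'.1, ht'.2.trans hst.right_mem.2⟩
  by_contra! hlt
  obtain ⟨d, hd0, hdt'⟩ := exists_between hlt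
  have hdt : w (B t) < d := (hst.strip _ (h.left_mem h0)).1.trans_lt hd0
  obtain ⟨i, hi, rfl⟩ := exists_mem_interior_apply_eq h.convex h.interior_nonempty
    (h.left_mem h0) (h.right_mem ht'1) hd0 hdt'
  obtain ⟨a, ha, hai⟩ := exists_mem_Icc_apply_eq h.continuousOn_right h0 ht'1 ht'.1
    (mem_uIcc_of_le (by rw [← h.start_eq]; exact hd0.le) hdt'.le)
  obtain ⟨b, hb, hbi⟩ := exists_mem_Icc_apply_eq h.continuousOn_right ht'1 hst.right_mem ht'.2
    (mem_uIcc_of_ge hdt.le hdt'.le)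
  obtain ⟨c, hc, hci⟩ := exists_mem_Icc_apply_eq h.continuousOn_left h0 hst.left_mem
    hst.left_mem.1 (mem_uIcc_of_le hd0.le (hdt'.le.trans (hst.strip _ (h.right_mem ht'1)).2))
  have ha0 : 0 < a := ha.1.lt_of_ne (by rintro rfl; rw [← h.start_eq] at hai; exact hd0.ne hai)
  have hat : a < t' := ha.2.lt_of_ne (by rintro rfl; exact hdt'.ne' hai)
  have hbt : b < t := hb.2.lt_of_ne (by rintro rfl; exact hdt.ne hbi)
  have hc1 := hc.2.trans hst.left_mem.2
  have ht1 := hst.right_mem.2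
  have hac : B a ≠ R c := h.swap.left_ne_right ⟨ha.1, ha.2.trans ht'1.2⟩ ⟨hc.1, hc1⟩
    (by linarith [hc.1]) (by linarith [ht'.2])
  rcases h.swap.eq_of_level_eq hst.width_ne_zero hi ⟨ha.1, ha.2.trans ht'1.2⟩ ⟨hc.1, hc1⟩ hai hci
    hac ⟨ht'.1.trans hb.1, hb.2.trans ht1⟩ hbi with heq | ⟨heq, -⟩ | ⟨heq, -⟩ <;>
    linarith [hb.1]

theorem start_apply_le_left (hst : IsAntipodal o P R B w u s t) (h : BoundingArcs P R B)
    (hs' : s' ∈ Icc 0 s) : w (R 0) ≤ w (R s') := by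
  simpa [h.start_eq] using hst.swap.right_apply_le_start h.swap hs'

theorem start_le_apply (hst : IsAntipodal o P R B w u s t) (h : BoundingArcs P R B)
    (hP : StrictConvex ℝ P) (hs : 0 < s) (ht : 0 < t) (hy : y ∈ P) (hw : w y = w (R 0)) :
    ω u (R 0) ≤ ω u y := by
  have h0 : (0 : ℝ) ∈ Icc (0 : ℝ) 1 := by simp
  have hr := h.left_mem hst.left_mem
  have hb := h.right_mem hst.right_mem
  have hstrip := hst.strip _ (h.left_mem h0)
  by_contra! hlt
  obtain ⟨q, hq, hqw⟩ := exists_mem_segment_apply_eq hstrip.1 hstrip.2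
  have hqu : ω u (R 0) ≤ ω u q := by
    rw [apply_eq_of_mem_segment hq hst.separates.level_eq.symm, ← hst.separates.level_eq]
    exact hst.separates.left_le 0 ⟨le_rfl, hs.le⟩
  rcases eq_or_eq_of_mem_segment_of_mem_frontier hP hy (h.convex.segment_subset hb hr hq)
    (mem_segment_of_apply_le hst.width_ne_zero hw hqw hlt hqu) (h.left_mem_frontier h0)
    with heq | rfl
  · exact hlt.ne' (heq ▸ rfl)
  rcases eq_or_eq_of_mem_segment_of_mem_frontier hP hb hr hq (h.left_mem_frontier h0)
    with heq | heq
  · rcases h.eq_zero_or_eq_one_of_eq h0 hst.right_mem heq with ⟨-, ht0⟩ | ⟨h01, -⟩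
    · exact ht.ne' ht0
    · exact zero_ne_one h01
  · exact hs.ne (h.injOn_left h0 hst.left_mem heq)

theorem norm_sub_start_le_of_chord (hst : IsAntipodal o P R B w u s t) (h : BoundingArcs P R B)
    (hP : StrictConvex ℝ P) (hC : ‖R s - B t‖ ≤ C) (hs' : s' ∈ Icc (0 : ℝ) 1)
    (ht' : t' ∈ Icc (0 : ℝ) 1) (hC' : ‖R s' - B t'‖ ≤ C) (hle : s' < s → t' ≤ t)
    (hlow : ω u (R s') < ω u (R 0)) : ‖R s' - R 0‖ ≤ C := by
  have h0 : (0 : ℝ) ∈ Icc (0 : ℝ) 1 := by simp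
  have hs's : s' < s := by
    by_contra! hge
    exact hlow.not_ge ((hst.separates.left_le 0 ⟨le_rfl, hst.left_mem.1⟩).trans
      (hst.separates.le_left s' ⟨hge, hs'.2⟩))
  have ht't := hle hs's
  rcases ht'.1.eq_or_lt with rfl | ht'0
  · rwa [h.start_eq]
  have hpos := start_apply_le_left hst h ⟨hs'.1, hs's.le⟩
  have hstrip := hst.strip _ (h.left_mem h0)
  obtain ⟨y, hy, hyw⟩ := exists_mem_segment_apply_eq
    (hst.right_apply_le_start h ⟨ht'.1, ht't⟩) hpos
  have hyu := hst.start_le_apply h hP (hs'.1.trans_lt hs's) (ht'0.trans_le ht't)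
    (h.convex.segment_subset (h.right_mem ht') (h.left_mem hs') hy) hyw
  obtain ⟨q, hq, hqw⟩ := exists_mem_segment_apply_eq (φ := w) (x := R s' - (R s - B t))
    (y := R s') (d := w (R 0)) (by
      simp only [map_sub]
      linarith [hst.strip _ (h.left_mem hs')]) hpos
  have hqu : ω u q = ω u (R s') := by
    have hends : ω u (R s' - (R s - B t)) = ω u (R s') := by
      simp only [map_sub, hst.separates.level_eq, sub_self, sub_zero]
    exact (apply_eq_of_mem_segment hq hends).trans hends
  have hcenter : R s' ∈ Metric.closedBall (R s') C :=
    Metric.mem_closedBall_self ((norm_nonneg _).trans hC)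
  have hball := convex_closedBall (R s') C
  have hmem := hball.segment_subset
    (hball.segment_subset (by simpa using hC) hcenter hq)
    (hball.segment_subset (by simpa [dist_comm, dist_eq_norm] using hC') hcenter hy)
    (mem_segment_of_apply_le hst.width_ne_zero hqw hyw (hqu.trans_lt hlow) hyu)
  rwa [Metric.mem_closedBall, dist_comm, dist_eq_norm] at hmem

end IsAntipodal

end Fan

section ParallelCertificate

variable {E : Type*} [NormedAddCommGroup E] [InnerProductSpace ℝ E]
  [Fact (Module.finrank ℝ E = 2)] {P : Set E} {R B : ℝ → E} {w : E →L[ℝ] ℝ}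
  {o : Orientation ℝ E (Fin 2)} {u x y : E} {s t C : ℝ} {f g : ℝ → ℝ}

local notation "ω" => Orientation.areaForm' o

variable (o) in
/-- A witness that the two arcs have a matching of cost at most `C` whose middle part is parallel
to `u`: by `width` no chord of `P` parallel to `u` is longer than `C`, and the points outside the
strip between the `u`-lines through the two common endpoints are within `C` of the endpoint on
their side. All the conditions are closed, so that they pass to the limit when `P` is
approximated. -/
structure ParallelCertificate (P : Set E) (R B : ℝ → E) (C : ℝ) (w : E →L[ℝ] ℝ) (u : E) :
    Prop where
  norm_eq_one : ‖u‖ = 1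
  apply_eq_one : w u = 1
  width : ∀ x ∈ P, ∀ y ∈ P, w (x - y) ≤ C
  start_le_end : ω u (R 0) ≤ ω u (R 1)
  left_start : ∀ s ∈ Icc (0 : ℝ) 1, ω u (R s) < ω u (R 0) → ‖R s - R 0‖ ≤ C
  right_start : ∀ t ∈ Icc (0 : ℝ) 1, ω u (B t) < ω u (B 0) → ‖B t - B 0‖ ≤ C
  left_end : ∀ s ∈ Icc (0 : ℝ) 1, ω u (R 1) < ω u (R s) → ‖R s - R 1‖ ≤ C
  right_end : ∀ t ∈ Icc (0 : ℝ) 1, ω u (B 1) < ω u (B t) → ‖B t - B 1‖ ≤ C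

namespace ParallelCertificate

theorem ne_zero (hc : ParallelCertificate o P R B C w u) : u ≠ 0 :=
  norm_ne_zero_iff.mp (hc.norm_eq_one ▸ one_ne_zero)

theorem norm_sub_le (hc : ParallelCertificate o P R B C w u) (hx : x ∈ P) (hy : y ∈ P)
    (hxy : ω u x = ω u y) : ‖x - y‖ ≤ C := by
  obtain ⟨c, hcu⟩ := exists_eq_smul_of_apply_eq_zero (x := x - y) (areaForm'_ne_zero o hc.ne_zero)
    hc.ne_zero (areaForm'_self o u) (by rw [map_sub, hxy, sub_self])
  have hw : w (x - y) = c := by rw [hcu, map_smul, hc.apply_eq_one, smul_eq_mul, mul_one]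
  rw [hcu, norm_smul, hc.norm_eq_one, mul_one, Real.norm_eq_abs, ← hw]
  exact abs_le.mpr ⟨by simpa using neg_le_neg (hc.width y hy x hx), hc.width x hx y hy⟩

protected theorem swap (hc : ParallelCertificate o P R B C w u) (h : BoundingArcs P R B) :
    ParallelCertificate o P B R C w u where
  norm_eq_one := hc.norm_eq_one
  apply_eq_one := hc.apply_eq_one
  width := hc.width
  start_le_end := h.start_eq ▸ h.end_eq ▸ hc.start_le_end
  left_start := hc.right_start
  right_start := hc.left_start
  left_end := hc.right_end
  right_end := hc.left_end

protected theorem reverse (hc : ParallelCertificate o P R B C w u) :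
    ParallelCertificate o P (fun s => R (1 - s)) (fun s => B (1 - s)) C (-w) (-u) where
  norm_eq_one := by rw [norm_neg, hc.norm_eq_one]
  apply_eq_one := by simp [hc.apply_eq_one]
  width x hx y hy := by simpa using hc.width y hy x hx
  start_le_end := by simpa using hc.start_le_end
  left_start s hs hlt := by
    simpa using hc.left_end (1 - s) (one_sub_mem_Icc.mpr (by simpa using hs)) (by simpa using hlt)
  right_start t ht hlt := by
    simpa using hc.right_end (1 - t) (one_sub_mem_Icc.mpr (by simpa using ht)) (by simpa using hlt)
  left_end s hs hlt := by
    simpa using hc.left_start (1 - s) (one_sub_mem_Icc.mpr (by simpa using hs))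
      (by simpa using hlt)
  right_end t ht hlt := by
    simpa using hc.right_start (1 - t) (one_sub_mem_Icc.mpr (by simpa using ht))
      (by simpa using hlt)

end ParallelCertificate

namespace IsAntipodal

theorem norm_sub_start_le (hst : IsAntipodal o P R B w u s t) (h : BoundingArcs P R B)
    (hP : StrictConvex ℝ P) (hf : IsRepar f) (hg : IsRepar g)
    (hC : ∀ τ ∈ Icc (0 : ℝ) 1, ‖R (f τ) - B (g τ)‖ ≤ C)
    (hτ : ∃ τ ∈ Icc (0 : ℝ) 1, f τ = s ∧ g τ = t) {a : ℝ} (ha : a ∈ Icc (0 : ℝ) 1)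
    (hlow : ω u (R a) < ω u (R 0)) : ‖R a - R 0‖ ≤ C := by
  obtain ⟨τ, hτ, rfl, rfl⟩ := hτ
  obtain ⟨σ, hσ, rfl⟩ := hf.2.2 ha
  refine hst.norm_sub_start_le_of_chord h hP (hC τ hτ) ha (hg.mem_Icc hσ) (hC σ hσ)
    (fun hlt => hg.monotoneOn hσ hτ ?_) hlow
  by_contra! hle
  exact hlt.not_ge (hf.monotoneOn hτ hσ hle.le)

theorem norm_sub_end_le (hst : IsAntipodal o P R B w u s t) (h : BoundingArcs P R B)
    (hP : StrictConvex ℝ P) (hf : IsRepar f) (hg : IsRepar g)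
    (hC : ∀ τ ∈ Icc (0 : ℝ) 1, ‖R (f τ) - B (g τ)‖ ≤ C)
    (hτ : ∃ τ ∈ Icc (0 : ℝ) 1, f τ = s ∧ g τ = t) {a : ℝ} (ha : a ∈ Icc (0 : ℝ) 1)
    (hhigh : ω u (R 1) < ω u (R a)) : ‖R a - R 1‖ ≤ C := by
  obtain ⟨τ, hτ, rfl, rfl⟩ := hτ
  simpa using hst.reverse.norm_sub_start_le h.reverse hP hf.reverse hg.reverse
    (fun τ hτ => by simpa using hC _ (one_sub_mem_Icc.mpr (by simpa using hτ)))
    ⟨1 - τ, one_sub_mem_Icc.mpr (by simpa using hτ), by simp⟩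
    (one_sub_mem_Icc.mpr (by simpa using ha)) (by simpa using hhigh)

theorem exists_smul_width_le (hst : IsAntipodal o P R B w u s t) (hu : ‖u‖ = 1)
    (hC : ‖R s - B t‖ ≤ C) : ∃ c : ℝ, (c • w) u = 1 ∧ ∀ x ∈ P, ∀ y ∈ P, (c • w) (x - y) ≤ C := by
  obtain ⟨k, hk⟩ := exists_eq_smul_of_apply_eq_zero (x := R s - B t)
    (areaForm'_ne_zero o hst.dir_ne_zero) hst.dir_ne_zero (areaForm'_self o u)
    (by rw [map_sub, hst.separates.level_eq, sub_self])
  have hlt := hst.lt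
  have hwk : w (R s) - w (B t) = k * w u := by simpa using congrArg w hk
  have hwu : w u ≠ 0 := fun h0 => by rw [h0, mul_zero] at hwk; linarith
  refine ⟨(w u)⁻¹, by simp [hwu], fun x hx y hy => ?_⟩
  have hx := hst.strip x hx
  have hy := hst.strip y hy
  calc (w u)⁻¹ * w (x - y) ≤ |(w u)⁻¹ * w (x - y)| := le_abs_self _
    _ = |w u|⁻¹ * |w (x - y)| := by rw [abs_mul, abs_inv]
    _ ≤ |w u|⁻¹ * (w (R s) - w (B t)) := by
      gcongr
      rw [map_sub]
      exact abs_le.mpr ⟨by linarith, by linarith⟩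
    _ = ‖R s - B t‖ := by
      rw [hk, norm_smul, hu, mul_one, Real.norm_eq_abs, ← abs_of_pos (sub_pos.mpr hlt), hwk,
        abs_mul]
      field_simp
    _ ≤ C := hC

protected theorem normalize (hst : IsAntipodal o P R B w u s t) :
    IsAntipodal o P R B w (‖u‖⁻¹ • u) s t where
  left_mem := hst.left_mem
  right_mem := hst.right_mem
  lt := hst.lt
  strip := hst.strip
  dir_ne_zero := smul_ne_zero (inv_ne_zero (norm_ne_zero_iff.mpr hst.dir_ne_zero)) hst.dir_ne_zero
  separates := by
    rw [map_smul]
    exact hst.separates.smul (inv_nonneg.mpr (norm_nonneg u))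

end IsAntipodal

theorem BoundingArcs.exists_parallelCertificate_of_strictConvex (h : BoundingArcs P R B)
    (hP : StrictConvex ℝ P) (hf : IsRepar f) (hg : IsRepar g)
    (hC : ∀ τ ∈ Icc (0 : ℝ) 1, ‖R (f τ) - B (g τ)‖ ≤ C) :
    ∃ w u, ParallelCertificate o P R B C w u := by
  obtain ⟨τ, hτ, w, u, hst⟩ := h.exists_isAntipodal o hP hf hg
  have hC' : ∀ τ ∈ Icc (0 : ℝ) 1, ‖B (g τ) - R (f τ)‖ ≤ C := fun τ hτ => by
    rw [norm_sub_rev]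
    exact hC τ hτ
  replace hst := hst.normalize
  have hu : ‖‖u‖⁻¹ • u‖ = 1 := by
    rw [norm_smul, norm_inv, norm_norm, inv_mul_cancel₀]
    rintro hu
    exact hst.dir_ne_zero (by rw [hu, inv_zero, zero_smul])
  obtain ⟨c, hcu, hcC⟩ := hst.exists_smul_width_le hu (hC τ hτ)
  refine ⟨c • w, _, hu, hcu, hcC, ?_, fun s => ?_, fun t => ?_, fun s => ?_, fun t => ?_⟩
  · exact (hst.separates.left_le 0 ⟨le_rfl, hst.left_mem.1⟩).trans
      (hst.separates.le_left 1 ⟨hst.left_mem.2, le_rfl⟩)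
  · exact hst.norm_sub_start_le h hP hf hg hC ⟨τ, hτ, rfl, rfl⟩
  · exact hst.swap.norm_sub_start_le h.swap hP hg hf hC' ⟨τ, hτ, rfl, rfl⟩
  · exact hst.norm_sub_end_le h hP hf hg hC ⟨τ, hτ, rfl, rfl⟩
  · exact hst.swap.norm_sub_end_le h.swap hP hg hf hC' ⟨τ, hτ, rfl, rfl⟩

end ParallelCertificate

section StrictlyConvexApproximation

open scoped Pointwise Topology

theorem strictConvex_setOf_le {E : Type*} [TopologicalSpace E] [AddCommGroup E]
    [Module ℝ E] {F : E → ℝ} (hF : StrictConvexOn ℝ univ F) (hc : Continuous F) (r : ℝ) :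
    StrictConvex ℝ {x | F x ≤ r} := by
  intro x (hx : F x ≤ r) y (hy : F y ≤ r) hxy a b ha hb hab
  refine interior_mono (fun z (hz : F z < r) => hz.le)
    ((isOpen_lt hc continuous_const).interior_eq.symm.subset ?_)
  calc F (a • x + b • y) < a • F x + b • F y := hF.2 (mem_univ x) (mem_univ y) hxy ha hb hab
    _ ≤ a • r + b • r := by gcongr
    _ = r := by rw [← add_smul, hab, one_smul]

theorem convexOn_gauge {E : Type*} [AddCommGroup E] [Module ℝ E] {s : Set E} (hs : Convex ℝ s)
    (habs : Absorbent ℝ s) : ConvexOn ℝ univ (gauge s) := by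
  refine ⟨convex_univ, fun x _ y _ a b ha hb _ => (gauge_add_le hs habs _ _).trans_eq ?_⟩
  rw [gauge_smul_of_nonneg ha, gauge_smul_of_nonneg hb]

theorem norm_gaugeRescale_sub_le {E : Type*} [NormedAddCommGroup E] [NormedSpace ℝ E] {s t : Set E}
    {x : E} {a : ℝ} (ha : 0 ≤ a) (hpos : 0 < gauge t x) (hle : gauge s x ≤ gauge t x)
    (hge : gauge t x ≤ (1 + a) * gauge s x) : ‖gaugeRescale s t x - x‖ ≤ a * ‖x‖ := by
  have hdiff : gaugeRescale s t x - x = (gauge s x / gauge t x - 1) • x := by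
    rw [gaugeRescale_def, sub_smul, one_smul]
  have hratio : 1 - gauge s x / gauge t x ≤ a := by
    rw [sub_le_comm, le_div_iff₀ hpos]
    nlinarith
  rw [hdiff, norm_smul, Real.norm_eq_abs, abs_sub_comm,
    abs_of_nonneg (sub_nonneg.mpr ((div_le_one hpos).mpr hle))]
  gcongr

variable {E : Type*} [NormedAddCommGroup E] [InnerProductSpace ℝ E] {P : Set E}

theorem strictConvexOn_gauge_sq_add {δ : ℝ} (hP : Convex ℝ P) (habs : Absorbent ℝ P) (hδ : 0 < δ) :
    StrictConvexOn ℝ univ fun x => gauge P x ^ 2 + δ * ‖x‖ ^ 2 := by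
  have hstrong : StrongConvexOn univ (2 * δ) fun x : E => gauge P x ^ 2 + δ * ‖x‖ ^ 2 := by
    rw [strongConvexOn_iff_convex]
    simpa [Pi.pow_def] using (convexOn_gauge hP habs).pow (fun x _ => gauge_nonneg x) 2
  exact hstrong.strictConvexOn (by positivity)

theorem exists_strictConvex_between (hPc : IsCompact P) (hP : Convex ℝ P) (h0 : P ∈ 𝓝 0) {a : ℝ}
    (ha : 0 < a) : ∃ Q, IsClosed Q ∧ StrictConvex ℝ Q ∧ (1 + a)⁻¹ • P ⊆ Q ∧ Q ⊆ P := by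
  obtain ⟨M, hM0, hM⟩ := hPc.isBounded.exists_pos_norm_le
  have habs := absorbent_nhds_zero (𝕜 := ℝ) h0
  have hcont : Continuous fun x : E => gauge P x ^ 2 + a / M ^ 2 * ‖x‖ ^ 2 :=
    ((continuous_gauge hP h0).pow 2).add (continuous_const.mul (continuous_norm.pow 2))
  refine ⟨{x | gauge P x ^ 2 + a / M ^ 2 * ‖x‖ ^ 2 ≤ 1}, isClosed_le hcont continuous_const,
    strictConvex_setOf_le (strictConvexOn_gauge_sq_add hP habs (by positivity)) hcont 1, ?_, ?_⟩
  · rintro _ ⟨x, hx, rfl⟩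
    have hgauge : gauge P x ^ 2 ≤ 1 := pow_le_one₀ (gauge_nonneg x) (gauge_le_one_of_mem hx)
    have hnorm : a / M ^ 2 * ‖x‖ ^ 2 ≤ a := by
      rw [div_mul_eq_mul_div, div_le_iff₀ (by positivity)]
      gcongr
      exact hM x hx
    have hfactor : gauge P ((1 + a)⁻¹ • x) ^ 2 + a / M ^ 2 * ‖(1 + a)⁻¹ • x‖ ^ 2
        = (gauge P x ^ 2 + a / M ^ 2 * ‖x‖ ^ 2) / (1 + a) ^ 2 := by
      rw [gauge_smul_of_nonneg (by positivity), norm_smul,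
        Real.norm_of_nonneg (by positivity : (0 : ℝ) ≤ (1 + a)⁻¹), smul_eq_mul]
      field_simp
    rw [mem_ofPred_eq, hfactor, div_le_one (by positivity)]
    nlinarith
  · intro x (hx : gauge P x ^ 2 + a / M ^ 2 * ‖x‖ ^ 2 ≤ 1)
    have hpos : 0 ≤ a / M ^ 2 * ‖x‖ ^ 2 := by positivity
    rw [← hPc.isClosed.closure_eq, ← gauge_le_one_iff_mem_closure hP h0]
    exact (sq_le_one_iff₀ (gauge_nonneg x)).mp (by linarith)

theorem exists_homeomorph_strictConvex_image_of_mem_nhds_zero (hPc : IsCompact P)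
    (hP : Convex ℝ P) (h0 : P ∈ 𝓝 0) {ε : ℝ} (hε : 0 < ε) :
    ∃ e : E ≃ₜ E, StrictConvex ℝ (e '' P) ∧ ∀ x ∈ P, ‖e x - x‖ ≤ ε := by
  obtain ⟨M, hM0, hM⟩ := hPc.isBounded.exists_pos_norm_le
  have ha : 0 < ε / M := by positivity
  obtain ⟨Q, hQc, hQ, hle, hge⟩ := exists_strictConvex_between hPc hP h0 ha
  have hQ0 : Q ∈ 𝓝 0 :=
    Filter.mem_of_superset ((set_smul_mem_nhds_zero_iff (by positivity)).mpr h0) hle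
  have hPb := NormedSpace.isVonNBounded_of_isBounded ℝ hPc.isBounded
  have hQb := hPb.subset hge
  refine ⟨gaugeRescaleHomeomorph P Q hP h0 hPb hQ.convex hQ0 hQb, ?_, fun x hx => ?_⟩
  · have himage := image_gaugeRescaleHomeomorph_closure hP h0 hPb hQ.convex hQ0 hQb
    rw [hPc.isClosed.closure_eq, hQc.closure_eq] at himage
    rwa [himage]
  change ‖gaugeRescale P Q x - x‖ ≤ ε
  rcases eq_or_ne x 0 with rfl | hx0
  · simpa using hε.le
  have hgauge : gauge Q x ≤ (1 + ε / M) * gauge P x := by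
    have hmono := gauge_mono (absorbent_nhds_zero (𝕜 := ℝ)
      ((set_smul_mem_nhds_zero_iff (inv_ne_zero (by positivity))).mpr h0)) hle x
    rwa [gauge_smul_left_of_nonneg (by positivity), inv_inv, Pi.smul_apply, smul_eq_mul] at hmono
  calc ‖gaugeRescale P Q x - x‖ ≤ ε / M * ‖x‖ :=
        norm_gaugeRescale_sub_le ha.le ((gauge_pos (absorbent_nhds_zero hQ0) hQb).mpr hx0)
          (gauge_mono (absorbent_nhds_zero hQ0) hge x) hgauge
    _ ≤ ε / M * M := by gcongr; exact hM x hx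
    _ = ε := div_mul_cancel₀ ε hM0.ne'

theorem exists_homeomorph_strictConvex_image (hPc : IsCompact P) (hP : Convex ℝ P)
    (hint : (interior P).Nonempty) {ε : ℝ} (hε : 0 < ε) :
    ∃ e : E ≃ₜ E, StrictConvex ℝ (e '' P) ∧ ∀ x ∈ P, ‖e x - x‖ ≤ ε := by
  obtain ⟨i, hi⟩ := hint
  have hnhds : (fun x => x + -i) '' P ∈ 𝓝 0 := by
    simpa using
      (Homeomorph.addRight (-i)).isOpenMap.image_mem_nhds (mem_interior_iff_mem_nhds.mp hi)
  obtain ⟨e, he, hclose⟩ := exists_homeomorph_strictConvex_image_of_mem_nhds_zero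
    (hPc.image (continuous_add_const (-i))) (by simpa only [add_comm] using hP.translate (-i))
    hnhds hε
  refine ⟨(Homeomorph.addRight (-i)).trans (e.trans (Homeomorph.addRight i)), ?_, fun x hx => ?_⟩
  · have himage := he.add_right i
    rwa [image_image, image_image] at himage
  · have hx' := hclose _ (mem_image_of_mem _ hx)
    convert hx' using 2
    simp only [Homeomorph.trans_apply, Homeomorph.coe_addRight]
    abel

end StrictlyConvexApproximation

section Approximation

open Filter
open scoped Topology

theorem BoundingArcs.image {E : Type*} [NormedAddCommGroup E] [NormedSpace ℝ E]
    {P : Set E} {R B : ℝ → E} (h : BoundingArcs P R B) (e : E ≃ₜ E) (he : Convex ℝ (e '' P)) :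
    BoundingArcs (e '' P) (e ∘ R) (e ∘ B) where
  isCompact := h.isCompact.image e.continuous
  convex := he
  interior_nonempty := e.image_interior P ▸ h.interior_nonempty.image e
  continuousOn_left := e.continuous.comp_continuousOn h.continuousOn_left
  continuousOn_right := e.continuous.comp_continuousOn h.continuousOn_right
  injOn_left := e.injective.comp_injOn h.injOn_left
  injOn_right := e.injective.comp_injOn h.injOn_right
  start_eq := congrArg e h.start_eq
  end_eq := congrArg e h.end_eq
  image_union := by
    rw [image_comp, image_comp, ← Set.image_union, h.image_union, e.image_frontier]
  image_inter := by
    rw [image_comp, image_comp, ← Set.image_inter e.injective, h.image_inter, image_pair]; rfl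

variable {E : Type*} [NormedAddCommGroup E] [InnerProductSpace ℝ E]
  [Fact (Module.finrank ℝ E = 2)] {P : Set E} {R B : ℝ → E} {o : Orientation ℝ E (Fin 2)}

local notation "ω" => Orientation.areaForm' o

theorem tendsto_clm_apply {F ι : Type*} [NormedAddCommGroup F] [NormedSpace ℝ F] {l : Filter ι}
    {w : ι → F →L[ℝ] ℝ} {x : ι → F} {w₀ : F →L[ℝ] ℝ} {x₀ : F} (hw : Tendsto w l (𝓝 w₀))
    (hx : Tendsto x l (𝓝 x₀)) : Tendsto (fun n => w n (x n)) l (𝓝 (w₀ x₀)) :=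
  (isBoundedBilinearMap_apply.continuous.tendsto (w₀, x₀)).comp (hw.prodMk_nhds hx)

variable (o) in
theorem tendsto_areaForm' {ι : Type*} {l : Filter ι} {u x : ι → E} {u₀ x₀ : E}
    (hu : Tendsto u l (𝓝 u₀)) (hx : Tendsto x l (𝓝 x₀)) :
    Tendsto (fun n => ω (u n) (x n)) l (𝓝 (ω u₀ x₀)) :=
  tendsto_clm_apply (((ω).continuous.tendsto u₀).comp hu) hx

section Limit

variable {ι : Type*} {l : Filter ι} [l.NeBot] {C : ι → ℝ} {w : ι → E →L[ℝ] ℝ} {u : ι → E}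
  {C₀ : ℝ} {w₀ : E →L[ℝ] ℝ} {u₀ : E}

theorem norm_sub_le_of_tendsto {x y : ι → E} {x₀ y₀ : E} (hC : Tendsto C l (𝓝 C₀))
    (hu : Tendsto u l (𝓝 u₀)) (hx : Tendsto x l (𝓝 x₀)) (hy : Tendsto y l (𝓝 y₀))
    (hle : ∀ n, ω (u n) (x n) < ω (u n) (y n) → ‖x n - y n‖ ≤ C n) (hlt : ω u₀ x₀ < ω u₀ y₀) :
    ‖x₀ - y₀‖ ≤ C₀ :=
  le_of_tendsto_of_tendsto (hx.sub hy).norm hC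
    (((tendsto_areaForm' o hu hx).eventually_lt (tendsto_areaForm' o hu hy) hlt).mono hle)

theorem ParallelCertificate.of_tendsto {T : ι → E → E} (h : BoundingArcs P R B)
    (hc : ∀ n, ParallelCertificate o (T n '' P) (T n ∘ R) (T n ∘ B) (C n) (w n) (u n))
    (hT : ∀ x ∈ P, Tendsto (T · x) l (𝓝 x)) (hC : Tendsto C l (𝓝 C₀)) (hw : Tendsto w l (𝓝 w₀))
    (hu : Tendsto u l (𝓝 u₀)) : ParallelCertificate o P R B C₀ w₀ u₀ := by
  have h0 : (0 : ℝ) ∈ Icc (0 : ℝ) 1 := by simp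
  have h1 : (1 : ℝ) ∈ Icc (0 : ℝ) 1 := by simp
  have hR : ∀ s ∈ Icc (0 : ℝ) 1, Tendsto (fun n => T n (R s)) l (𝓝 (R s)) :=
    fun s hs => hT _ (h.left_mem hs)
  have hB : ∀ t ∈ Icc (0 : ℝ) 1, Tendsto (fun n => T n (B t)) l (𝓝 (B t)) :=
    fun t ht => hT _ (h.right_mem ht)
  refine ⟨?_, ?_, fun x hx y hy => ?_, ?_, fun s hs => ?_, fun t ht => ?_, fun s hs hlt => ?_,
    fun t ht hlt => ?_⟩
  · exact tendsto_nhds_unique hu.norm (by simp [(hc _).norm_eq_one])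
  · exact tendsto_nhds_unique (tendsto_clm_apply hw hu) (by simp [(hc _).apply_eq_one])
  · exact le_of_tendsto_of_tendsto' (tendsto_clm_apply hw ((hT x hx).sub (hT y hy))) hC fun n =>
      (hc n).width _ (mem_image_of_mem _ hx) _ (mem_image_of_mem _ hy)
  · exact le_of_tendsto_of_tendsto' (tendsto_areaForm' o hu (hR 0 h0))
      (tendsto_areaForm' o hu (hR 1 h1)) fun n => (hc n).start_le_end
  · exact norm_sub_le_of_tendsto hC hu (hR s hs) (hR 0 h0) fun n => (hc n).left_start s hs
  · exact norm_sub_le_of_tendsto hC hu (hB t ht) (hB 0 h0) fun n => (hc n).right_start t ht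
  · rw [norm_sub_rev]
    refine norm_sub_le_of_tendsto hC hu (hR 1 h1) (hR s hs) (fun n hn => ?_) hlt
    exact norm_sub_rev (T n (R s)) _ ▸ (hc n).left_end s hs hn
  · rw [norm_sub_rev]
    refine norm_sub_le_of_tendsto hC hu (hB 1 h1) (hB t ht) (fun n hn => ?_) hlt
    exact norm_sub_rev (T n (B t)) _ ▸ (hc n).right_end t ht hn

end Limit

theorem norm_le_of_apply_sub_le {F : Type*} [NormedAddCommGroup F] [NormedSpace ℝ F] {P : Set F}
    {T : F → F} {w : F →L[ℝ] ℝ} {i : F} {r C : ℝ} (hr : 0 < r) (hP : Metric.closedBall i r ⊆ P)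
    (hT : ∀ x ∈ P, ‖T x - x‖ ≤ r / 2) (hw : ∀ x ∈ P, ∀ y ∈ P, w (T x - T y) ≤ C) :
    ‖w‖ ≤ C / r := by
  have hball : ∀ v : F, ‖v‖ ≤ r → i + v ∈ P := fun v hv => hP (by simpa using hv)
  have hle : ∀ v ∈ Metric.closedBall (0 : F) r, ‖w v‖ ≤ (C + r * ‖w‖) / 2 := by
    have hone : ∀ v : F, ‖v‖ ≤ r → w v ≤ (C + r * ‖w‖) / 2 := by
      intro v hv
      have hx := hball v hv
      have hy := hball (-v) (by rwa [norm_neg])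
      have hdecomp : (2 : ℝ) • v = (T (i + v) - T (i + -v))
          - ((T (i + v) - (i + v)) - (T (i + -v) - (i + -v))) := by
        rw [two_smul]; abel
      have herr : ‖(T (i + v) - (i + v)) - (T (i + -v) - (i + -v))‖ ≤ r :=
        (norm_sub_le _ _).trans (by linarith [hT _ hx, hT _ hy])
      have hwerr := (neg_le_abs _).trans (w.le_of_opNorm_le_of_le le_rfl herr)
      have hwv := congrArg w hdecomp
      rw [map_smul, smul_eq_mul, map_sub w (T (i + v) - T (i + -v))] at hwv
      linarith [hw _ hx _ hy]
    exact fun v hv => abs_le.mpr ⟨by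
      linarith [hone (-v) (by simpa using hv), map_neg w v], hone v (by simpa using hv)⟩
  have hbound := w.opNorm_bound_of_ball_bound hr _ hle
  rw [le_div_iff₀ hr] at hbound ⊢
  linarith

theorem BoundingArcs.exists_homeomorph_parallelCertificate (h : BoundingArcs P R B) {C ε : ℝ}
    (hC : ∃ f g, IsRepar f ∧ IsRepar g ∧ ∀ τ ∈ Icc (0 : ℝ) 1, ‖R (f τ) - B (g τ)‖ ≤ C)
    (hε : 0 < ε) :
    ∃ (e : E ≃ₜ E) (w : E →L[ℝ] ℝ) (u : E), (∀ x ∈ P, ‖e x - x‖ ≤ ε) ∧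
      ParallelCertificate o (e '' P) (e ∘ R) (e ∘ B) (C + 2 * ε) w u := by
  obtain ⟨e, he, hclose⟩ :=
    exists_homeomorph_strictConvex_image h.isCompact h.convex h.interior_nonempty hε
  obtain ⟨f, g, hf, hg, hfg⟩ := hC
  have hcost : ∀ τ ∈ Icc (0 : ℝ) 1, ‖(e ∘ R) (f τ) - (e ∘ B) (g τ)‖ ≤ C + 2 * ε := by
    intro τ hτ
    have hR := hclose _ (h.left_mem (hf.mem_Icc hτ))
    have hB := hclose _ (h.right_mem (hg.mem_Icc hτ))
    rw [norm_sub_rev] at hB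
    rw [Function.comp_apply, Function.comp_apply]
    linarith [hfg τ hτ, norm_sub_le_norm_sub_add_norm_sub (e (R (f τ))) (R (f τ)) (e (B (g τ))),
      norm_sub_le_norm_sub_add_norm_sub (R (f τ)) (B (g τ)) (e (B (g τ)))]
  obtain ⟨w, u, hc⟩ :=
    (h.image e he.convex).exists_parallelCertificate_of_strictConvex he hf hg hcost
  exact ⟨e, w, u, hclose, hc⟩

/-- The perturbed regions are strictly convex, and the certificates for them subconverge: the
directions `u` are unit vectors, and the functionals `w` are bounded since `P` contains a ball. -/
theorem BoundingArcs.exists_parallelCertificate (h : BoundingArcs P R B) {δ : ℝ}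
    (hδ : ∀ η > 0, ∃ f g, IsRepar f ∧ IsRepar g ∧
      ∀ τ ∈ Icc (0 : ℝ) 1, ‖R (f τ) - B (g τ)‖ ≤ δ + η) :
    ∃ w u, ParallelCertificate o P R B δ w u := by
  have : FiniteDimensional ℝ E := .of_fact_finrank_eq_two
  have : ProperSpace E := FiniteDimensional.proper_real E
  have : ProperSpace (E →L[ℝ] ℝ) := FiniteDimensional.proper_real _
  obtain ⟨i, hi⟩ := h.interior_nonempty
  obtain ⟨r, hr, hball⟩ := Metric.nhds_basis_closedBall.mem_iff.mp (mem_interior_iff_mem_nhds.mp hi)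
  obtain ⟨ε, -, hε, hεlim⟩ := exists_seq_strictAnti_tendsto' (half_pos hr)
  have hεr : ∀ n, ε n ≤ r / 2 := fun n => (hε n).2.le
  choose e w u hclose hc using fun n =>
    h.exists_homeomorph_parallelCertificate (o := o) (hδ (ε n) (hε n).1) (hε n).1
  have hw : ∀ n, ‖w n‖ ≤ (δ + r / 2 + 2 * (r / 2)) / r := fun n =>
    (norm_le_of_apply_sub_le hr hball (fun x hx => (hclose n x hx).trans (hεr n)) fun x hx y hy =>
      (hc n).width _ (mem_image_of_mem _ hx) _ (mem_image_of_mem _ hy)).trans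
      (by gcongr <;> exact hεr n)
  obtain ⟨⟨w₀, u₀⟩, -, k, hk, hlim⟩ := ((isCompact_closedBall (0 : E →L[ℝ] ℝ)
    ((δ + r / 2 + 2 * (r / 2)) / r)).prod (isCompact_closedBall (0 : E) 1)).tendsto_subseq
    (x := fun n => (w n, u n)) fun n => by simpa [(hc n).norm_eq_one] using hw n
  have hεk : Tendsto (ε ∘ k) atTop (𝓝 0) := hεlim.comp hk.tendsto_atTop
  refine ⟨w₀, u₀, .of_tendsto h (fun n => hc (k n)) (fun x hx => ?_) ?_
    ((continuous_fst.tendsto _).comp hlim) ((continuous_snd.tendsto _).comp hlim)⟩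
  · exact tendsto_iff_norm_sub_tendsto_zero.mpr
      (squeeze_zero (fun _ => norm_nonneg _) (fun n => hclose (k n) x hx) hεk)
  · simpa using (hεk.const_add δ).add (hεk.const_mul 2)

end Approximation

section Coupling

variable {ρ β : ℝ → ℝ} {x y s : ℝ}

/-- The parameters `s` whose partner `x - s` on the antidiagonal of sum `x` has at least the same
level. -/
def couplingSet (ρ β : ℝ → ℝ) (x : ℝ) : Set ℝ :=
  {s | s ∈ Icc 0 1 ∧ x - s ∈ Icc 0 1 ∧ ρ s ≤ β (x - s)}

/-- The last parameter `s` at which `ρ` has not overtaken `β` along the antidiagonal of sum `x`.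
As `x` runs through `[0, 2]`, the pair of `couplingParam ρ β x` and `x - couplingParam ρ β x`
traverses a monotone path along which `ρ` and `β` agree. -/
def couplingParam (ρ β : ℝ → ℝ) (x : ℝ) : ℝ := sSup (couplingSet ρ β x)

theorem le_couplingParam (hs : s ∈ couplingSet ρ β x) : s ≤ couplingParam ρ β x :=
  le_csSup ⟨1, fun _ hs' => hs'.1.2⟩ hs

theorem couplingSet_nonempty (mρ : MonotoneOn ρ (Icc 0 1)) (mβ : MonotoneOn β (Icc 0 1))
    (h0 : ρ 0 = β 0) (h1 : ρ 1 = β 1) (hx : x ∈ Icc (0 : ℝ) 2) : (couplingSet ρ β x).Nonempty := by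
  rcases le_total x 1 with hx1 | hx1
  · refine ⟨0, by simp, by simpa using ⟨hx.1, hx1⟩, ?_⟩
    rw [sub_zero, h0]
    exact mβ (by simp) ⟨hx.1, hx1⟩ hx.1
  · have hmem : x - 1 ∈ Icc (0 : ℝ) 1 := ⟨by linarith, by linarith [hx.2]⟩
    refine ⟨x - 1, hmem, by simp, ?_⟩
    rw [sub_sub_cancel, ← h1]
    exact mρ hmem (by simp) hmem.2

theorem isClosed_couplingSet (cρ : ContinuousOn ρ (Icc 0 1)) (cβ : ContinuousOn β (Icc 0 1)) :
    IsClosed (couplingSet ρ β x) := by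
  have hS : IsClosed (Icc (0 : ℝ) 1 ∩ (fun s => x - s) ⁻¹' Icc 0 1) :=
    isClosed_Icc.inter (isClosed_Icc.preimage (by fun_prop))
  have hc : ContinuousOn (fun s => β (x - s) - ρ s) (Icc 0 1 ∩ (fun s => x - s) ⁻¹' Icc 0 1) :=
    (cβ.comp (by fun_prop) fun s hs => hs.2).sub (cρ.mono inter_subset_left)
  have heq : couplingSet ρ β x = (Icc 0 1 ∩ (fun s => x - s) ⁻¹' Icc 0 1) ∩
      (fun s => β (x - s) - ρ s) ⁻¹' Ici 0 := by
    ext s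
    simp only [couplingSet, mem_ofPred_eq, mem_inter_iff, mem_preimage, mem_Ici, sub_nonneg,
      and_assoc]
  exact heq ▸ hc.preimage_isClosed_of_isClosed hS isClosed_Ici

theorem couplingParam_mem (cρ : ContinuousOn ρ (Icc 0 1)) (cβ : ContinuousOn β (Icc 0 1))
    (mρ : MonotoneOn ρ (Icc 0 1)) (mβ : MonotoneOn β (Icc 0 1)) (h0 : ρ 0 = β 0) (h1 : ρ 1 = β 1)
    (hx : x ∈ Icc (0 : ℝ) 2) : couplingParam ρ β x ∈ couplingSet ρ β x :=
  (isClosed_couplingSet cρ cβ).csSup_mem (couplingSet_nonempty mρ mβ h0 h1 hx)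
    ⟨1, fun _ hs => hs.1.2⟩

theorem couplingParam_le_of_le (mβ : MonotoneOn β (Icc 0 1))
    (hx : couplingParam ρ β x ∈ couplingSet ρ β x) (hy : couplingParam ρ β y ∈ couplingSet ρ β y)
    (hxy : x ≤ y) : couplingParam ρ β x ≤ couplingParam ρ β y := by
  obtain ⟨hs, ht, hle⟩ := hx
  rcases le_total (y - couplingParam ρ β x) 1 with hy1 | hy1
  · have hmem : y - couplingParam ρ β x ∈ Icc (0 : ℝ) 1 := ⟨by linarith [ht.1], hy1⟩
    exact le_couplingParam ⟨hs, hmem, hle.trans (mβ ht hmem (by linarith))⟩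
  · linarith [hy.2.1.2]

theorem sub_couplingParam_le_of_le (mρ : MonotoneOn ρ (Icc 0 1))
    (hx : couplingParam ρ β x ∈ couplingSet ρ β x) (hy : couplingParam ρ β y ∈ couplingSet ρ β y)
    (hxy : x ≤ y) : x - couplingParam ρ β x ≤ y - couplingParam ρ β y := by
  obtain ⟨hs, ht, hle⟩ := hy
  by_contra! hlt
  have hmem : couplingParam ρ β y - (y - x) ∈ Icc (0 : ℝ) 1 :=
    ⟨by linarith [hx.1.1], by linarith [hs.2]⟩
  have hsum : x - (couplingParam ρ β y - (y - x)) = y - couplingParam ρ β y := by ring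
  have hcoup : couplingParam ρ β y - (y - x) ∈ couplingSet ρ β x :=
    ⟨hmem, hsum ▸ ht, hsum ▸ (mρ hmem hs (by linarith)).trans hle⟩
  linarith [le_couplingParam hcoup]

theorem apply_couplingParam_eq (cρ : ContinuousOn ρ (Icc 0 1)) (cβ : ContinuousOn β (Icc 0 1))
    (mρ : MonotoneOn ρ (Icc 0 1)) (mβ : MonotoneOn β (Icc 0 1)) (h0 : ρ 0 = β 0) (h1 : ρ 1 = β 1)
    (hx : x ∈ Icc (0 : ℝ) 2) :
    ρ (couplingParam ρ β x) = β (x - couplingParam ρ β x) := by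
  obtain ⟨hs, ht, hle⟩ := couplingParam_mem cρ cβ mρ mβ h0 h1 hx
  refine hle.antisymm ?_
  have hmem : ∀ r ∈ Icc (couplingParam ρ β x) (min 1 x),
      r ∈ Icc (0 : ℝ) 1 ∧ x - r ∈ Icc (0 : ℝ) 1 := fun r hr =>
    ⟨⟨hs.1.trans hr.1, hr.2.trans (min_le_left _ _)⟩,
      sub_nonneg.mpr (hr.2.trans (min_le_right _ _)), (sub_le_sub_left hr.1 x).trans ht.2⟩
  have hlast : β (x - min 1 x) ≤ ρ (min 1 x) := by
    rcases le_total x 1 with hx1 | hx1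
    · rw [min_eq_right hx1, sub_self, ← h0]
      exact mρ (by simp) ⟨hx.1, hx1⟩ hx.1
    · rw [min_eq_left hx1, h1]
      exact mβ ⟨by linarith, by linarith [hx.2]⟩ (by simp) (by linarith [hx.2])
  obtain ⟨r, hr, hr0⟩ := intermediate_value_Icc (f := fun r => ρ r - β (x - r))
    (le_min hs.2 (sub_nonneg.mp ht.1))
    ((cρ.mono fun r hr => (hmem r hr).1).sub (cβ.comp (by fun_prop) fun r hr => (hmem r hr).2))
    ⟨sub_nonpos.mpr hle, sub_nonneg.mpr hlast⟩
  have hr_eq := le_couplingParam ⟨(hmem r hr).1, (hmem r hr).2, (sub_eq_zero.mp hr0).le⟩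
  exact hr_eq.antisymm hr.1 ▸ (sub_eq_zero.mp hr0).ge

theorem continuousOn_couplingParam (mρ : MonotoneOn ρ (Icc 0 1)) (mβ : MonotoneOn β (Icc 0 1))
    (hmem : ∀ x ∈ Icc (0 : ℝ) 2, couplingParam ρ β x ∈ couplingSet ρ β x) :
    ContinuousOn (couplingParam ρ β) (Icc 0 2) := by
  suffices LipschitzOnWith 1 (couplingParam ρ β) (Icc 0 2) from this.continuousOn
  refine LipschitzOnWith.of_le_add fun x hx y hy => ?_
  rw [Real.dist_eq]
  rcases le_total x y with hxy | hxy
  · linarith [couplingParam_le_of_le mβ (hmem x hx) (hmem y hy) hxy, abs_nonneg (x - y)]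
  · linarith [sub_couplingParam_le_of_le mρ (hmem y hy) (hmem x hx) hxy, le_abs_self (x - y)]

theorem exists_isRepar_apply_eq (cρ : ContinuousOn ρ (Icc 0 1)) (cβ : ContinuousOn β (Icc 0 1))
    (mρ : MonotoneOn ρ (Icc 0 1)) (mβ : MonotoneOn β (Icc 0 1)) (h0 : ρ 0 = β 0)
    (h1 : ρ 1 = β 1) :
    ∃ f g, IsRepar f ∧ IsRepar g ∧ ∀ τ ∈ Icc (0 : ℝ) 1, ρ (f τ) = β (g τ) := by
  have hmem : ∀ x ∈ Icc (0 : ℝ) 2, couplingParam ρ β x ∈ couplingSet ρ β x := fun x hx =>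
    couplingParam_mem cρ cβ mρ mβ h0 h1 hx
  have hdouble : MapsTo (fun τ : ℝ => 2 * τ) (Icc 0 1) (Icc 0 2) := fun τ hτ =>
    ⟨by linarith [hτ.1], by linarith [hτ.2]⟩
  have hcont : ContinuousOn (fun τ => couplingParam ρ β (2 * τ)) (Icc 0 1) :=
    (continuousOn_couplingParam mρ mβ hmem).comp (by fun_prop) hdouble
  have hstart : couplingParam ρ β 0 = 0 := by
    obtain ⟨hs, ht, -⟩ := hmem 0 (by simp)
    linarith [hs.1, ht.1]
  have hend : couplingParam ρ β 2 = 1 := by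
    obtain ⟨hs, ht, -⟩ := hmem 2 (by simp)
    linarith [hs.2, ht.2]
  refine ⟨fun τ => couplingParam ρ β (2 * τ), fun τ => 2 * τ - couplingParam ρ β (2 * τ),
    isRepar_of_continuousOn hcont (fun a ha b hb hab => ?_) (by simp [hstart]) (by simp [hend]),
    isRepar_of_continuousOn (.sub (by fun_prop) hcont) (fun a ha b hb hab => ?_)
      (by simp [hstart]) (by norm_num [hend]),
    fun τ hτ => apply_couplingParam_eq cρ cβ mρ mβ h0 h1 (hdouble hτ)⟩
  · exact couplingParam_le_of_le mβ (hmem _ (hdouble ha)) (hmem _ (hdouble hb)) (by linarith)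
  · exact sub_couplingParam_le_of_le mρ (hmem _ (hdouble ha)) (hmem _ (hdouble hb)) (by linarith)

end Coupling

section Clamp

/-- The point of the interval `[a, b]` nearest to `x`, for `a ≤ b`. -/
def clamp (a b x : ℝ) : ℝ := max a (min b x)

variable {a b x : ℝ}

theorem continuous_clamp : Continuous (clamp a b) := by
  unfold clamp
  fun_prop

theorem clamp_eq_left (hx : x ≤ a) : clamp a b x = a := max_eq_left (min_le_of_right_le hx)

theorem clamp_eq_right (hab : a ≤ b) (hx : b ≤ x) : clamp a b x = b := by
  rw [clamp, min_eq_left hx, max_eq_right hab]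

theorem clamp_eq_self (ha : a ≤ x) (hb : x ≤ b) : clamp a b x = x := by
  rw [clamp, min_eq_right hb, max_eq_right ha]

theorem le_of_clamp_le_left (hab : a < b) (hx : clamp a b x ≤ a) : x ≤ a := by
  by_contra! hlt
  exact (lt_max_of_lt_right (lt_min hab hlt)).not_ge hx

theorem clamp_neg (hab : a ≤ b) : clamp (-b) (-a) (-x) = -clamp a b x := by
  rw [clamp, clamp, min_neg_neg, max_neg_neg, min_max_distrib_left, min_eq_right hab]

end Clamp

section Levels

variable {E : Type*} [NormedAddCommGroup E] [NormedSpace ℝ E]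
  {P : Set E} {R B : ℝ → E} {φ : E →L[ℝ] ℝ} {s t : ℝ}

/-- The points `R s` and `B t` lie on the same level of `φ`, where levels outside the strip
between the two common endpoints count as the nearest level of the strip. -/
def SameClampedLevel (φ : E →L[ℝ] ℝ) (R B : ℝ → E) (s t : ℝ) : Prop :=
  clamp (φ (R 0)) (φ (R 1)) (φ (R s)) = clamp (φ (R 0)) (φ (R 1)) (φ (B t))

namespace SameClampedLevel

protected theorem swap (hst : SameClampedLevel φ R B s t) (h : BoundingArcs P R B) :
    SameClampedLevel φ B R t s := by
  rw [SameClampedLevel, ← h.start_eq, ← h.end_eq]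
  exact hst.symm

protected theorem reverse (hst : SameClampedLevel φ R B s t) (hle : φ (R 0) ≤ φ (R 1)) :
    SameClampedLevel (-φ) (fun s => R (1 - s)) (fun s => B (1 - s)) (1 - s) (1 - t) := by
  simpa [SameClampedLevel, clamp_neg hle] using hst

end SameClampedLevel

theorem BoundingArcs.exists_last_start_level (h : BoundingArcs P R B) (hle : φ (R 0) ≤ φ (R 1)) :
    ∃ s ∈ Icc (0 : ℝ) 1, φ (R s) = φ (R 0) ∧ ∀ s' ∈ Icc s 1, φ (R 0) ≤ φ (R s') := by
  have hclosed : IsClosed (Icc 0 1 ∩ (φ ∘ R) ⁻¹' Iic (φ (R 0))) :=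
    (φ.continuous.comp_continuousOn h.continuousOn_left).preimage_isClosed_of_isClosed
      isClosed_Icc isClosed_Iic
  obtain ⟨s, ⟨hs, hsle⟩, hlast⟩ := (isCompact_Icc.of_isClosed_subset hclosed
    inter_subset_left).exists_isGreatest ⟨0, by simp, le_refl (φ (R 0))⟩
  obtain ⟨r, hr, hr0⟩ := exists_mem_Icc_apply_eq h.continuousOn_left hs (by simp) hs.2
    (mem_uIcc_of_le hsle hle)
  have hs0 : φ (R s) = φ (R 0) :=
    (hlast ⟨⟨hs.1.trans hr.1, hr.2⟩, hr0.le⟩).antisymm hr.1 ▸ hr0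
  refine ⟨s, hs, hs0, fun s' hs' => ?_⟩
  by_contra! hlt
  have hs's : s' = s := (hlast ⟨⟨hs.1.trans hs'.1, hs'.2⟩, hlt.le⟩).antisymm hs'.1
  exact hlt.ne (hs's ▸ hs0)

theorem BoundingArcs.left_one_sided_of_forall_interior_ne (h : BoundingArcs P R B)
    (hint : ∀ i ∈ interior P, φ i ≠ φ (R 0)) :
    (∀ s ∈ Icc (0 : ℝ) 1, φ (R s) ≤ φ (R 0)) ∨ ∀ s ∈ Icc (0 : ℝ) 1, φ (R 0) ≤ φ (R s) := by
  by_contra! ⟨⟨a, ha, hlt⟩, b, hb, hgt⟩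
  obtain ⟨i, hi, hi0⟩ := exists_mem_interior_apply_eq h.convex h.interior_nonempty
    (h.left_mem hb) (h.left_mem ha) hgt hlt
  exact hint i hi hi0

theorem BoundingArcs.not_sameClampedLevel_zero_one (h : BoundingArcs P R B)
    (hlt : φ (R 0) < φ (R 1)) : ¬ SameClampedLevel φ R B 0 1 := by
  rw [SameClampedLevel, ← h.end_eq, clamp_eq_left le_rfl, clamp_eq_right hlt.le le_rfl]
  exact hlt.ne

end Levels

section LevelMatching

variable {E : Type*} [NormedAddCommGroup E] [InnerProductSpace ℝ E]
  [Fact (Module.finrank ℝ E = 2)] {P : Set E} {R B : ℝ → E} {φ : E →L[ℝ] ℝ} {s t : ℝ}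
  {f g : ℝ → ℝ}

namespace BoundingArcs

/-- If the clamped level decreased somewhere, then `R` would meet some level at three points. -/
theorem monotoneOn_clamp (h : BoundingArcs P R B) (hφ : φ ≠ 0) :
    MonotoneOn (fun s => clamp (φ (R 0)) (φ (R 1)) (φ (R s))) (Icc 0 1) := by
  intro s₁ hs₁ s₂ hs₂ hle
  by_contra! hlt
  obtain ⟨d, hd₂, hd₁⟩ := exists_between hlt
  simp only [clamp, max_lt_iff, lt_max_iff, min_lt_iff, lt_min_iff] at hd₁ hd₂
  have h0 : φ (R 0) < d := hd₂.1
  obtain ⟨h1, hs₁d⟩ := hd₁.resolve_left h0.not_gt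
  have hs₂d : φ (R s₂) < d := hd₂.2.resolve_left h1.not_gt
  obtain ⟨i, hi, rfl⟩ := exists_mem_interior_apply_eq h.convex h.interior_nonempty
    (h.left_mem hs₂) (h.left_mem hs₁) hs₂d hs₁d
  obtain ⟨a, ha, hai⟩ := exists_mem_Icc_apply_eq h.continuousOn_left (by simp) hs₁ hs₁.1
    (mem_uIcc_of_le h0.le hs₁d.le)
  obtain ⟨b, hb, hbi⟩ := exists_mem_Icc_apply_eq h.continuousOn_left hs₁ hs₂ hle
    (mem_uIcc_of_ge hs₂d.le hs₁d.le)
  obtain ⟨c, hc, hci⟩ := exists_mem_Icc_apply_eq h.continuousOn_left hs₂ (by simp) hs₂.2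
    (mem_uIcc_of_le hs₂d.le h1.le)
  have ha_lt : a < s₁ := ha.2.lt_of_ne (by rintro rfl; exact hs₁d.ne' hai)
  have hb_lt : b < s₂ := hb.2.lt_of_ne (by rintro rfl; exact hs₂d.ne hbi)
  have haI : a ∈ Icc (0 : ℝ) 1 := ⟨ha.1, ha.2.trans hs₁.2⟩
  have hbI : b ∈ Icc (0 : ℝ) 1 := ⟨hs₁.1.trans hb.1, hb.2.trans hs₂.2⟩
  have hcI : c ∈ Icc (0 : ℝ) 1 := ⟨hs₂.1.trans hc.1, hc.2⟩
  have hab : R a ≠ R b := fun heq => (ha_lt.trans_le hb.1).ne (h.injOn_left haI hbI heq)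
  rcases eq_or_eq_of_mem_frontier_of_apply_eq h.convex hφ hi (h.left_mem_frontier haI)
    (h.left_mem_frontier hbI) (h.left_mem_frontier hcI) hai hbi hci hab with heq | heq
  · linarith [h.injOn_left hcI haI heq, hc.1, hle]
  · linarith [h.injOn_left hcI hbI heq, hc.1]

theorem exists_isRepar_sameClampedLevel (h : BoundingArcs P R B) (hφ : φ ≠ 0) :
    ∃ f g, IsRepar f ∧ IsRepar g ∧ ∀ τ ∈ Icc (0 : ℝ) 1, SameClampedLevel φ R B (f τ) (g τ) :=
  have hcont : ∀ {γ : ℝ → E}, ContinuousOn γ (Icc 0 1) →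
      ContinuousOn (fun s => clamp (φ (R 0)) (φ (R 1)) (φ (γ s))) (Icc 0 1) := fun hγ =>
    continuous_clamp.comp_continuousOn (φ.continuous.comp_continuousOn hγ)
  exists_isRepar_apply_eq (hcont h.continuousOn_left) (hcont h.continuousOn_right)
    (h.monotoneOn_clamp hφ) (h.start_eq ▸ h.end_eq ▸ h.swap.monotoneOn_clamp hφ)
    (by rw [h.start_eq]) (by rw [h.end_eq])

/-- If `R` dips below its starting level, then it meets that level again. A point of `B` other
than the start and not above that level would yield a third point on it. -/
theorem eq_zero_of_apply_lt_of_apply_le (h : BoundingArcs P R B) (hφ : φ ≠ 0)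
    (hlt : φ (R 0) < φ (R 1)) (hs : s ∈ Icc (0 : ℝ) 1) (ht : t ∈ Icc (0 : ℝ) 1)
    (hRs : φ (R s) < φ (R 0)) (hBt : φ (B t) ≤ φ (R 0)) : t = 0 := by
  by_contra hne
  obtain ⟨i, hi, h0⟩ := exists_mem_interior_apply_eq h.convex h.interior_nonempty
    (h.left_mem hs) (h.left_mem (by simp)) hRs hlt
  obtain ⟨a, ha, hai⟩ := exists_mem_Icc_apply_eq h.continuousOn_left hs (by simp) hs.2
    (mem_uIcc_of_le hRs.le hlt.le)
  obtain ⟨b, hb, hbi⟩ := exists_mem_Icc_apply_eq h.continuousOn_right ht (by simp) ht.2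
    (mem_uIcc_of_le hBt (h.end_eq ▸ hlt.le))
  have ha0 : 0 < a := hs.1.trans_lt (ha.1.lt_of_ne (by rintro rfl; exact hRs.ne hai))
  have hb0 : 0 < b := (ht.1.lt_of_ne' hne).trans_le hb.1
  have ha1 : a < 1 := ha.2.lt_of_ne (by rintro rfl; exact hlt.ne' hai)
  rcases h.eq_of_level_eq hφ hi ⟨ha0.le, ha.2⟩ ⟨hb0.le, hb.2⟩ (hai.trans h0.symm)
    (hbi.trans h0.symm) (h.left_ne_right ⟨ha0.le, ha.2⟩ ⟨hb0.le, hb.2⟩ (by linarith)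
      (by linarith [hb.2])) (s' := 0) (by simp) h0.symm with heq | ⟨-, heq⟩ | ⟨heq, -⟩
  · exact ha0.ne heq
  · exact hb0.ne' heq
  · exact zero_ne_one heq

theorem eq_zero_of_sameClampedLevel (h : BoundingArcs P R B) (hφ : φ ≠ 0)
    (hlt : φ (R 0) < φ (R 1)) (hs : s ∈ Icc (0 : ℝ) 1) (ht : t ∈ Icc (0 : ℝ) 1)
    (hst : SameClampedLevel φ R B s t) (hRs : φ (R s) < φ (R 0)) : t = 0 :=
  h.eq_zero_of_apply_lt_of_apply_le hφ hlt hs ht hRs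
    (le_of_clamp_le_left hlt (hst.symm.trans (clamp_eq_left hRs.le)).le)

theorem exists_start_fan_of_apply_lt (h : BoundingArcs P R B) (hφ : φ ≠ 0)
    (hlt : φ (R 0) < φ (R 1)) (hf : IsRepar f) (hg : IsRepar g)
    (hfg : ∀ τ ∈ Icc (0 : ℝ) 1, SameClampedLevel φ R B (f τ) (g τ)) (hs : s ∈ Icc (0 : ℝ) 1)
    (hRs : φ (R s) < φ (R 0)) :
    ∃ t₀ ∈ Icc (0 : ℝ) 1, (∀ τ ∈ Icc 0 t₀, g τ = 0) ∧
      ∀ τ ∈ Icc t₀ 1, φ (R 0) ≤ φ (R (f τ)) ∧ φ (R 0) ≤ φ (B (g τ)) := by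
  obtain ⟨r, hr, hr0, hlast⟩ := h.exists_last_start_level hlt.le
  obtain ⟨t₀, ht₀, rfl⟩ := hf.2.2 hr
  refine ⟨t₀, ht₀, fun τ hτ => ?_, fun τ hτ => ⟨?_, ?_⟩⟩
  · have hτ1 : τ ∈ Icc (0 : ℝ) 1 := ⟨hτ.1, hτ.2.trans ht₀.2⟩
    refine h.eq_zero_of_apply_lt_of_apply_le hφ hlt hs (hg.mem_Icc hτ1) hRs
      (le_of_clamp_le_left hlt ?_)
    calc clamp (φ (R 0)) (φ (R 1)) (φ (B (g τ)))
        = clamp (φ (R 0)) (φ (R 1)) (φ (R (f τ))) := (hfg τ hτ1).symm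
      _ ≤ clamp (φ (R 0)) (φ (R 1)) (φ (R (f t₀))) :=
        h.monotoneOn_clamp hφ (hf.mem_Icc hτ1) hr (hf.monotoneOn hτ1 ht₀ hτ.2)
      _ = φ (R 0) := clamp_eq_left hr0.le
  · have hτ1 : τ ∈ Icc (0 : ℝ) 1 := ⟨ht₀.1.trans hτ.1, hτ.2⟩
    exact hlast _ ⟨hf.monotoneOn ht₀ hτ1 hτ.1, (hf.mem_Icc hτ1).2⟩
  · by_contra! hBlt
    have hg0 := h.eq_zero_of_apply_lt_of_apply_le hφ hlt hs
      (hg.mem_Icc ⟨ht₀.1.trans hτ.1, hτ.2⟩) hRs hBlt.le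
    rw [hg0, ← h.start_eq] at hBlt
    exact hBlt.false

theorem exists_start_fan (h : BoundingArcs P R B) (hφ : φ ≠ 0) (hlt : φ (R 0) < φ (R 1))
    (hf : IsRepar f) (hg : IsRepar g)
    (hfg : ∀ τ ∈ Icc (0 : ℝ) 1, SameClampedLevel φ R B (f τ) (g τ)) :
    ∃ t₀ ∈ Icc (0 : ℝ) 1, ((∀ τ ∈ Icc 0 t₀, f τ = 0) ∨ ∀ τ ∈ Icc 0 t₀, g τ = 0) ∧
      ∀ τ ∈ Icc t₀ 1, φ (R 0) ≤ φ (R (f τ)) ∧ φ (R 0) ≤ φ (B (g τ)) := by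
  by_cases hR : ∃ s ∈ Icc (0 : ℝ) 1, φ (R s) < φ (R 0)
  · obtain ⟨s, hs, hRs⟩ := hR
    obtain ⟨t₀, ht₀, hfan, hlevel⟩ := h.exists_start_fan_of_apply_lt hφ hlt hf hg hfg hs hRs
    exact ⟨t₀, ht₀, Or.inr hfan, hlevel⟩
  by_cases hB : ∃ t ∈ Icc (0 : ℝ) 1, φ (B t) < φ (B 0)
  · obtain ⟨t, ht, hBt⟩ := hB
    obtain ⟨t₀, ht₀, hfan, hlevel⟩ := h.swap.exists_start_fan_of_apply_lt hφ
      (h.start_eq ▸ h.end_eq ▸ hlt) hg hf (fun τ hτ => (hfg τ hτ).swap h) ht hBt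
    exact ⟨t₀, ht₀, Or.inl hfan, fun τ hτ => h.start_eq ▸ (hlevel τ hτ).symm⟩
  push Not at hR hB
  refine ⟨0, by simp, Or.inl fun τ hτ => ?_, fun τ hτ =>
    ⟨hR _ (hf.mem_Icc hτ), h.start_eq ▸ hB _ (hg.mem_Icc hτ)⟩⟩
  rw [hτ.2.antisymm hτ.1, hf.map_zero]

theorem exists_end_fan (h : BoundingArcs P R B) (hφ : φ ≠ 0) (hlt : φ (R 0) < φ (R 1))
    (hf : IsRepar f) (hg : IsRepar g)
    (hfg : ∀ τ ∈ Icc (0 : ℝ) 1, SameClampedLevel φ R B (f τ) (g τ)) :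
    ∃ t₁ ∈ Icc (0 : ℝ) 1, ((∀ τ ∈ Icc t₁ 1, f τ = 1) ∨ ∀ τ ∈ Icc t₁ 1, g τ = 1) ∧
      ∀ τ ∈ Icc 0 t₁, φ (R (f τ)) ≤ φ (R 1) ∧ φ (B (g τ)) ≤ φ (R 1) := by
  obtain ⟨t, ht, hfan, hlevel⟩ := h.reverse.exists_start_fan (neg_ne_zero.mpr hφ)
    (by simpa using hlt) hf.reverse hg.reverse fun τ hτ => (hfg (1 - τ)
      (one_sub_mem_Icc.mpr (by simpa using hτ))).reverse hlt.le
  refine ⟨1 - t, one_sub_mem_Icc.mpr (by simpa using ht), ?_, fun τ hτ => ?_⟩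
  · refine hfan.imp (fun hfan τ hτ => ?_) (fun hfan τ hτ => ?_) <;>
    exact (sub_eq_zero.mp (by
      simpa only [sub_sub_cancel] using
        hfan (1 - τ) (one_sub_mem_Icc.mpr (by simpa using hτ)))).symm
  · simpa using hlevel (1 - τ) (one_sub_mem_Icc.mpr (by simpa using hτ))

end BoundingArcs

end LevelMatching

/-- The conclusion of the theorem, with the cost of the matching bounded by `C`: two fans at the
ends, and in between all matched pairs span parallel chords. -/
def HasParallelMatching {E : Type*} [NormedAddCommGroup E] [NormedSpace ℝ E] (C : ℝ)
    (R B : ℝ → E) : Prop :=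
  ∃ f g : ℝ → ℝ, IsRepar f ∧ IsRepar g ∧ (∀ τ ∈ Icc (0 : ℝ) 1, ‖R (f τ) - B (g τ)‖ ≤ C) ∧
    ∃ u : E, u ≠ 0 ∧ ∃ t₀ t₁ : ℝ, 0 ≤ t₀ ∧ t₀ ≤ t₁ ∧ t₁ ≤ 1 ∧
      ((∀ τ ∈ Icc (0 : ℝ) t₀, f τ = 0) ∨ ∀ τ ∈ Icc (0 : ℝ) t₀, g τ = 0) ∧
      ((∀ τ ∈ Icc t₁ (1 : ℝ), f τ = 1) ∨ ∀ τ ∈ Icc t₁ (1 : ℝ), g τ = 1) ∧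
      ∀ τ ∈ Icc t₀ t₁, ∃ c : ℝ, R (f τ) - B (g τ) = c • u

protected theorem HasParallelMatching.swap {E : Type*} [NormedAddCommGroup E] [NormedSpace ℝ E]
    {C : ℝ} {R B : ℝ → E} (hm : HasParallelMatching C R B) : HasParallelMatching C B R := by
  obtain ⟨f, g, hf, hg, hC, u, hu, t₀, t₁, h0, h01, h1, hstart, hend, hmid⟩ := hm
  refine ⟨g, f, hg, hf, fun τ hτ => norm_sub_rev (R (f τ)) _ ▸ hC τ hτ, u, hu, t₀, t₁, h0, h01, h1,
    hstart.symm, hend.symm, fun τ hτ => ?_⟩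
  obtain ⟨c, hc⟩ := hmid τ hτ
  exact ⟨-c, by rw [neg_smul, ← hc, neg_sub]⟩

section Matching

variable {E : Type*} [NormedAddCommGroup E] [InnerProductSpace ℝ E]
  [Fact (Module.finrank ℝ E = 2)] {P : Set E} {R B : ℝ → E} {φ : E →L[ℝ] ℝ} {w : E →L[ℝ] ℝ}
  {o : Orientation ℝ E (Fin 2)} {u : E} {s t C : ℝ}

namespace BoundingArcs

theorem forall_le_or_forall_le_of_level_eq (h : BoundingArcs P R B) (hφ : φ ≠ 0)
    (h01 : φ (R 0) = φ (R 1)) :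
    (∀ s ∈ Icc (0 : ℝ) 1, φ (R s) ≤ φ (R 0)) ∨ ∀ t ∈ Icc (0 : ℝ) 1, φ (B t) ≤ φ (B 0) := by
  by_contra! ⟨⟨s, hs, hRs⟩, t, ht, hBt⟩
  obtain ⟨d, hd, hdlt⟩ := exists_between (lt_min hRs (h.start_eq ▸ hBt))
  obtain ⟨hds, hdt⟩ := lt_min_iff.mp hdlt
  obtain ⟨i, hi, rfl⟩ := exists_mem_interior_apply_eq h.convex h.interior_nonempty
    (h.left_mem (by simp)) (h.left_mem hs) hd hds
  obtain ⟨a, ha, hai⟩ := exists_mem_Icc_apply_eq h.continuousOn_left (by simp) hs hs.1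
    (mem_uIcc_of_le hd.le hds.le)
  obtain ⟨b, hb, hbi⟩ := exists_mem_Icc_apply_eq h.continuousOn_left hs (by simp) hs.2
    (mem_uIcc_of_ge (h01 ▸ hd.le) hds.le)
  obtain ⟨c, hc, hci⟩ := exists_mem_Icc_apply_eq h.continuousOn_right (by simp) ht ht.1
    (mem_uIcc_of_le (h.start_eq ▸ hd.le) hdt.le)
  have hab : a < b := (ha.2.lt_of_ne (by rintro rfl; exact hds.ne' hai)).trans_le hb.1
  have ha0 : 0 < a := ha.1.lt_of_ne (by rintro rfl; exact hd.ne hai)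
  have haI : a ∈ Icc (0 : ℝ) 1 := ⟨ha.1, ha.2.trans hs.2⟩
  have hcI : c ∈ Icc (0 : ℝ) 1 := ⟨hc.1, hc.2.trans ht.2⟩
  have hb1 : b < 1 := hb.2.lt_of_ne (by rintro rfl; exact (h01 ▸ hd).ne hbi)
  rcases h.eq_of_level_eq hφ hi haI hcI hai hci
    (h.left_ne_right haI hcI (by linarith [hc.1]) (by linarith [hcI.2]))
    ⟨ha0.le.trans hab.le, hb.2⟩ hbi with heq | ⟨heq, -⟩ | ⟨heq, -⟩ <;> linarith

theorem left_le_right_or_right_le_left_of_level_eq (h : BoundingArcs P R B) (hφ : φ ≠ 0)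
    (h01 : φ (R 0) = φ (R 1)) :
    ((∀ s ∈ Icc (0 : ℝ) 1, φ (R s) ≤ φ (R 0)) ∧ ∀ t ∈ Icc (0 : ℝ) 1, φ (B 1) ≤ φ (B t)) ∨
      (∀ t ∈ Icc (0 : ℝ) 1, φ (B t) ≤ φ (B 0)) ∧ ∀ s ∈ Icc (0 : ℝ) 1, φ (R 1) ≤ φ (R s) := by
  have hB : φ (B 1) = φ (B 0) := by rw [← h.start_eq, ← h.end_eq, h01]
  rw [hB, ← h01]
  by_cases hint : ∃ i ∈ interior P, φ i = φ (R 0)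
  · obtain ⟨i, hi, hi0⟩ := hint
    have hne : R 0 ≠ B 1 := h.end_eq ▸ h.start_ne_end
    rcases h.separates_or_separates_neg hφ hi (by simp) (by simp) hi0.symm
      (by rw [hi0, hB, h.start_eq]) hne with hsep | hsep
    · exact Or.inr ⟨hB ▸ hsep.right_le, hsep.le_left⟩
    · refine Or.inl ⟨fun s hs => neg_le_neg_iff.mp (hsep.le_left s hs), fun t ht => ?_⟩
      exact hB ▸ neg_le_neg_iff.mp (hsep.right_le t ht)
  push Not at hint
  have habove := h.forall_le_or_forall_le_of_level_eq hφ h01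
  have hbelow := h.forall_le_or_forall_le_of_level_eq (neg_ne_zero.mpr hφ) (congrArg Neg.neg h01)
  simp only [neg_apply, neg_le_neg_iff] at hbelow
  have hR := h.left_one_sided_of_forall_interior_ne hint
  have hB := h.swap.left_one_sided_of_forall_interior_ne (h.start_eq ▸ hint)
  tauto

end BoundingArcs

local notation "ω" => Orientation.areaForm' o

namespace ParallelCertificate

theorem norm_sub_start_le (hc : ParallelCertificate o P R B C w u) (h : BoundingArcs P R B)
    (hs : s ∈ Icc (0 : ℝ) 1) (hle : ω u (R s) ≤ ω u (R 0)) : ‖R s - R 0‖ ≤ C :=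
  hle.lt_or_eq.elim (hc.left_start s hs)
    (hc.norm_sub_le (h.left_mem hs) (h.left_mem (by simp)))

theorem norm_sub_end_le (hc : ParallelCertificate o P R B C w u) (h : BoundingArcs P R B)
    (hs : s ∈ Icc (0 : ℝ) 1) (hle : ω u (R 1) ≤ ω u (R s)) : ‖R s - R 1‖ ≤ C := by
  simpa using hc.reverse.norm_sub_start_le h.reverse (s := 1 - s)
    (one_sub_mem_Icc.mpr (by simpa using hs)) (by simpa using hle)

theorem hasParallelMatching_of_one_sided (hc : ParallelCertificate o P R B C w u)
    (h : BoundingArcs P R B) (h01 : ω u (R 0) = ω u (R 1))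
    (hR : ∀ s ∈ Icc (0 : ℝ) 1, ω u (R s) ≤ ω u (R 0))
    (hB : ∀ t ∈ Icc (0 : ℝ) 1, ω u (B 1) ≤ ω u (B t)) : HasParallelMatching C R B := by
  have hf : IsRepar fun τ => min (2 * τ) 1 :=
    isRepar_of_continuousOn (by fun_prop)
      (fun a _ b _ hab => min_le_min_right 1 (by linarith)) (by simp) (by simp)
  have hf1 : ∀ τ : ℝ, 1 / 2 ≤ τ → min (2 * τ) 1 = 1 := fun τ hτ => min_eq_right (by linarith)
  have hg : IsRepar fun τ => max 0 (2 * τ - 1) :=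
    isRepar_of_continuousOn (by fun_prop)
      (fun a _ b _ hab => max_le_max_left 0 (by linarith)) (by simp) (by norm_num)
  have hg0 : ∀ τ : ℝ, τ ≤ 1 / 2 → max 0 (2 * τ - 1) = 0 := fun τ hτ => max_eq_left (by linarith)
  refine ⟨_, _, hf, hg, fun τ hτ => ?_, u, hc.ne_zero, 1 / 2, 1 / 2, by norm_num, le_rfl,
    by norm_num, Or.inr fun τ hτ => hg0 τ hτ.2, Or.inl fun τ hτ => hf1 τ hτ.1, fun τ hτ => ?_⟩
  · rcases le_total τ (1 / 2) with hle | hle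
    · rw [hg0 τ hle, ← h.start_eq]
      exact hc.norm_sub_start_le h (hf.mem_Icc hτ) (hR _ (hf.mem_Icc hτ))
    · rw [hf1 τ hle, h.end_eq, norm_sub_rev]
      exact (hc.swap h).norm_sub_end_le h.swap (hg.mem_Icc hτ) (hB _ (hg.mem_Icc hτ))
  · rw [hf1 τ hτ.1, hg0 τ hτ.2, ← h.start_eq]
    exact exists_eq_smul_of_apply_eq_zero (areaForm'_ne_zero o hc.ne_zero) hc.ne_zero
      (areaForm'_self o u) (by rw [map_sub, h01, sub_self])

theorem hasParallelMatching_of_start_eq_end (hc : ParallelCertificate o P R B C w u)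
    (h : BoundingArcs P R B) (h01 : ω u (R 0) = ω u (R 1)) : HasParallelMatching C R B := by
  rcases h.left_le_right_or_right_le_left_of_level_eq (areaForm'_ne_zero o hc.ne_zero) h01 with
    ⟨hR, hB⟩ | ⟨hB, hR⟩
  · exact hc.hasParallelMatching_of_one_sided h h01 hR hB
  · exact ((hc.swap h).hasParallelMatching_of_one_sided h.swap
      (h.start_eq ▸ h.end_eq ▸ h01) hB hR).swap

theorem norm_sub_le_of_sameClampedLevel_of_lt (hc : ParallelCertificate o P R B C w u)
    (h : BoundingArcs P R B) (h01 : ω u (R 0) < ω u (R 1)) (hs : s ∈ Icc (0 : ℝ) 1)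
    (ht : t ∈ Icc (0 : ℝ) 1) (hst : SameClampedLevel (ω u) R B s t)
    (hlt : ω u (R s) < ω u (R 0) ∨ ω u (R 1) < ω u (R s)) : ‖R s - B t‖ ≤ C := by
  have hω := areaForm'_ne_zero o hc.ne_zero
  rcases hlt with hlt | hlt
  · rw [h.eq_zero_of_sameClampedLevel hω h01 hs ht hst hlt, ← h.start_eq]
    exact hc.left_start s hs hlt
  · have ht1 := h.reverse.eq_zero_of_sameClampedLevel (neg_ne_zero.mpr hω) (by simpa using h01)
      (one_sub_mem_Icc.mpr (by simpa using hs)) (one_sub_mem_Icc.mpr (by simpa using ht))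
      (hst.reverse h01.le) (by simpa using hlt)
    rw [← sub_eq_zero.mp ht1, ← h.end_eq]
    exact hc.left_end s hs hlt

theorem norm_sub_le_of_sameClampedLevel (hc : ParallelCertificate o P R B C w u)
    (h : BoundingArcs P R B) (h01 : ω u (R 0) < ω u (R 1)) (hs : s ∈ Icc (0 : ℝ) 1)
    (ht : t ∈ Icc (0 : ℝ) 1) (hst : SameClampedLevel (ω u) R B s t) : ‖R s - B t‖ ≤ C := by
  by_cases hR : ω u (R s) < ω u (R 0) ∨ ω u (R 1) < ω u (R s)
  · exact hc.norm_sub_le_of_sameClampedLevel_of_lt h h01 hs ht hst hR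
  by_cases hB : ω u (B t) < ω u (B 0) ∨ ω u (B 1) < ω u (B t)
  · rw [norm_sub_rev]
    exact (hc.swap h).norm_sub_le_of_sameClampedLevel_of_lt h.swap (h.start_eq ▸ h.end_eq ▸ h01)
      ht hs (hst.swap h) hB
  rw [← h.start_eq, ← h.end_eq] at hB
  push Not at hR hB
  rw [SameClampedLevel, clamp_eq_self hR.1 hR.2, clamp_eq_self hB.1 hB.2] at hst
  exact hc.norm_sub_le (h.left_mem hs) (h.right_mem ht) hst

theorem hasParallelMatching_of_lt (hc : ParallelCertificate o P R B C w u)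
    (h : BoundingArcs P R B) (h01 : ω u (R 0) < ω u (R 1)) : HasParallelMatching C R B := by
  have hω := areaForm'_ne_zero o hc.ne_zero
  obtain ⟨f, g, hf, hg, hfg⟩ := h.exists_isRepar_sameClampedLevel hω
  obtain ⟨t₀, ht₀, hstart, hlower⟩ := h.exists_start_fan hω h01 hf hg hfg
  obtain ⟨t₁, ht₁, hend, hupper⟩ := h.exists_end_fan hω h01 hf hg hfg
  have hle : t₀ ≤ t₁ := by
    by_contra! hlt
    have hlevel := hfg t₀ ht₀
    have h₀ : t₀ ∈ Icc 0 t₀ := ⟨ht₀.1, le_rfl⟩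
    have h₁ : t₀ ∈ Icc t₁ 1 := ⟨hlt.le, ht₀.2⟩
    rcases hstart with hf0 | hg0 <;> rcases hend with hf1 | hg1
    · exact zero_ne_one ((hf0 t₀ h₀).symm.trans (hf1 t₀ h₁))
    · exact h.not_sameClampedLevel_zero_one h01 (hf0 t₀ h₀ ▸ hg1 t₀ h₁ ▸ hlevel)
    · exact h.swap.not_sameClampedLevel_zero_one (h.start_eq ▸ h.end_eq ▸ h01)
        ((hf1 t₀ h₁ ▸ hg0 t₀ h₀ ▸ hlevel).swap h)
    · exact zero_ne_one ((hg0 t₀ h₀).symm.trans (hg1 t₀ h₁))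
  refine ⟨f, g, hf, hg, fun τ hτ => hc.norm_sub_le_of_sameClampedLevel h h01 (hf.mem_Icc hτ)
    (hg.mem_Icc hτ) (hfg τ hτ), u, hc.ne_zero, t₀, t₁, ht₀.1, hle, ht₁.2, hstart, hend,
    fun τ hτ => ?_⟩
  have hlevel := hfg τ ⟨ht₀.1.trans hτ.1, hτ.2.trans ht₁.2⟩
  obtain ⟨hRa, hBa⟩ := hlower τ ⟨hτ.1, hτ.2.trans ht₁.2⟩
  obtain ⟨hRb, hBb⟩ := hupper τ ⟨ht₀.1.trans hτ.1, hτ.2⟩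
  rw [SameClampedLevel, clamp_eq_self hRa hRb, clamp_eq_self hBa hBb] at hlevel
  exact exists_eq_smul_of_apply_eq_zero hω hc.ne_zero (areaForm'_self o u)
    (by rw [map_sub, hlevel, sub_self])

theorem hasParallelMatching (hc : ParallelCertificate o P R B C w u) (h : BoundingArcs P R B) :
    HasParallelMatching C R B :=
  hc.start_le_end.eq_or_lt.elim (hc.hasParallelMatching_of_start_eq_end h)
    (hc.hasParallelMatching_of_lt h)

end ParallelCertificate

end Matching

section FrechetDistance

variable {P : Set E2} {R B : ℝ → E2} {f g : ℝ → ℝ} {τ C : ℝ}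

theorem norm_sub_le_eCost (hR : ContinuousOn R (Icc 0 1)) (hB : ContinuousOn B (Icc 0 1))
    (hf : IsRepar f) (hg : IsRepar g) (hτ : τ ∈ Icc (0 : ℝ) 1) :
    ‖R (f τ) - B (g τ)‖ ≤ eCost R B f g := by
  obtain ⟨M, hM⟩ := isCompact_Icc.exists_bound_of_continuousOn
    ((hR.comp hf.continuousOn hf.2.1).sub (hB.comp hg.continuousOn hg.2.1))
  refine le_csSup ⟨M, ?_⟩ ⟨τ, hτ, rfl⟩
  rintro _ ⟨σ, hσ, rfl⟩
  exact hM σ hσ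

theorem eCost_le (hC : ∀ τ ∈ Icc (0 : ℝ) 1, ‖R (f τ) - B (g τ)‖ ≤ C) : eCost R B f g ≤ C := by
  refine csSup_le ⟨_, 0, by simp, rfl⟩ ?_
  rintro _ ⟨τ, hτ, rfl⟩
  exact hC τ hτ

theorem eFrechet_le_eCost (hf : IsRepar f) (hg : IsRepar g) : eFrechet R B ≤ eCost R B f g := by
  refine csInf_le ⟨0, ?_⟩ ⟨f, g, hf, hg, rfl⟩
  rintro _ ⟨f', g', -, -, rfl⟩
  exact Real.sSup_nonneg (by rintro _ ⟨τ, -, rfl⟩; exact norm_nonneg _)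

theorem exists_isRepar_norm_sub_le_of_eFrechet_lt (hR : ContinuousOn R (Icc 0 1))
    (hB : ContinuousOn B (Icc 0 1)) (hC : eFrechet R B < C) :
    ∃ f g, IsRepar f ∧ IsRepar g ∧ ∀ τ ∈ Icc (0 : ℝ) 1, ‖R (f τ) - B (g τ)‖ ≤ C := by
  have hne : {c : ℝ | ∃ f g : ℝ → ℝ, IsRepar f ∧ IsRepar g ∧ c = eCost R B f g}.Nonempty :=
    ⟨_, id, id, isRepar_id, isRepar_id, rfl⟩
  obtain ⟨_, ⟨f, g, hf, hg, rfl⟩, hlt⟩ := exists_lt_of_csInf_lt hne hC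
  exact ⟨f, g, hf, hg, fun τ hτ => (norm_sub_le_eCost hR hB hf hg hτ).trans hlt.le⟩

end FrechetDistance

theorem exists_maximally_parallel_matching_general {P : Set E2} {R B : ℝ → E2}
    (h : BoundingArcs P R B) :
    ∃ f g : ℝ → ℝ, IsRepar f ∧ IsRepar g ∧ eCost R B f g = eFrechet R B ∧
      ∃ u : E2, u ≠ 0 ∧ ∃ t₀ t₁ : ℝ, 0 ≤ t₀ ∧ t₀ ≤ t₁ ∧ t₁ ≤ 1 ∧
        ((∀ t ∈ Icc (0 : ℝ) t₀, f t = 0) ∨ (∀ t ∈ Icc (0 : ℝ) t₀, g t = 0)) ∧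
        ((∀ t ∈ Icc t₁ (1 : ℝ), f t = 1) ∨ (∀ t ∈ Icc t₁ (1 : ℝ), g t = 1)) ∧
        ∀ t ∈ Icc t₀ t₁, ∃ c : ℝ, R (f t) - B (g t) = c • u := by
  have : Fact (Module.finrank ℝ E2 = 2) := ⟨by simp⟩
  let o : Orientation ℝ E2 (Fin 2) := (EuclideanSpace.basisFun (Fin 2) ℝ).toBasis.orientation
  obtain ⟨w, u, hcert⟩ := h.exists_parallelCertificate (o := o) fun η hη =>
    exists_isRepar_norm_sub_le_of_eFrechet_lt h.continuousOn_left h.continuousOn_right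
      (lt_add_of_pos_right (eFrechet R B) hη)
  obtain ⟨f, g, hf, hg, hcost, hparallel⟩ := hcert.hasParallelMatching h
  exact ⟨f, g, hf, hg, (eCost_le hcost).antisymm (eFrechet_le_eCost hf hg), hparallel⟩

/-- If `R` and `B` bound a compact convex polygon `P`, there is
a maximally-parallel Fréchet matching: a matching `(f, g)` of cost `d_F(R, B)`, a
direction `u ≠ 0` and times `t₀ ≤ t₁` such that in the first fan `[0, t₀]` one
curve stays at the common start point, in the last fan `[t₁, 1]` one curve stays
at the common end point, and in the parallel part `[t₀, t₁]` every matched pair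
of points lies on a line parallel to `u`. -/
theorem exists_maximally_parallel_matching
    (P : Set E2) (V : Finset E2) (hP : P = convexHull ℝ (V : Set E2))
    (hPint : (interior P).Nonempty)
    (R B : ℝ → E2)
    (hRc : ContinuousOn R (Icc 0 1)) (hBc : ContinuousOn B (Icc 0 1))
    (hRpa : IsPiecewiseAffine R) (hBpa : IsPiecewiseAffine B)
    (hRinj : InjOn R (Icc 0 1)) (hBinj : InjOn B (Icc 0 1))
    (h0 : R 0 = B 0) (h1 : R 1 = B 1)
    (hbd : R '' Icc (0:ℝ) 1 ∪ B '' Icc (0:ℝ) 1 = frontier P)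
    (hint : R '' Icc (0:ℝ) 1 ∩ B '' Icc (0:ℝ) 1 = {R 0, R 1}) :
    ∃ f g : ℝ → ℝ, IsRepar f ∧ IsRepar g ∧ eCost R B f g = eFrechet R B ∧
      ∃ u : E2, u ≠ 0 ∧ ∃ t₀ t₁ : ℝ, 0 ≤ t₀ ∧ t₀ ≤ t₁ ∧ t₁ ≤ 1 ∧
        ((∀ t ∈ Icc (0:ℝ) t₀, f t = 0) ∨ (∀ t ∈ Icc (0:ℝ) t₀, g t = 0)) ∧
        ((∀ t ∈ Icc t₁ (1:ℝ), f t = 1) ∨ (∀ t ∈ Icc t₁ (1:ℝ), g t = 1)) ∧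
        ∀ t ∈ Icc t₀ t₁, ∃ c : ℝ, R (f t) - B (g t) = c • u :=
  exists_maximally_parallel_matching_general
    ⟨hP ▸ V.finite_toSet.isCompact_convexHull (𝕜 := ℝ), hP ▸ convex_convexHull ℝ _, hPint,
      hRc, hBc, hRinj, hBinj, h0, h1, hbd, hint⟩
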